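/- There exists a Riemannian metric g of class C^{2,1} on the open unit ball B₁ ⊂ ℝ² (i.e. g is twice continuously differentiable with Lipschitz continuous second derivatives) such that for every radius r with 0 < r ≤ 1 there is no injective map u : B_r → ℝ³ of class C² satisfying (∇u(x))ᵀ ∇u(x) = g(x) for all x ∈ B_r; that is, no neighborhood of the origin in (B₁, g) can be realized as a C² surface in ℝ³. (Pogorelov's counterexample, 1972.) -/

import Mathlib

noncomputable section
open Matrix Set Metric

attribute [local instance] Matrix.normedAddCommGroup Matrix.normedSpace

abbrev E2 := EuclideanSpace ℝ (Fin 2)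

/-- The Jacobian matrix (3×2) of a map `u : ℝ² → ℝ³` at a point `x`. -/
def Jac (u : E2 → EuclideanSpace ℝ (Fin 3)) (x : E2) : Matrix (Fin 3) (Fin 2) ℝ :=
  Matrix.of fun i j => fderiv ℝ u x (EuclideanSpace.single j 1) i

/-!
The metric is conformal, `g = l • 1` with `l = 1 + ∑ κⱼ bⱼ`, where the `bⱼ` are bumps of class
`C^{2,1}` supported on disjoint closed discs. A sequence of target discs shrinks to the origin, and
isolated test discs accumulate at every point of every target circle.

Write `h` for the second fundamental form of a `C²` immersion `U`, so that the Gauss equation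
expresses `det h` through the second derivatives of `l`. On a test disc the curvature is positive
near the boundary circle and vanishes outside. If `h₁₁ ≠ 0` there, a partial Legendre transform of
the height function flattens the surface outside the disc: the transform is affine along
one direction up to the circle, so its second differences at a point of contact are of lower order
than the ones which positive curvature just inside the circle forces. Hence `h₁₁` vanishes somewhere
on every test disc, and so at every point where test discs accumulate.

On a target circle, therefore, `h₁₁ = 0` and, as the curvature vanishes there, `h₁₂ = 0`. So `∂₁U`
is constant along the circle, and Rolle's theorem for a normal component of `∂₁U / √l` along the
horizontal diameter yields a point of the target disc where `h₁₁ = 0` and the curvature is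
nonpositive, while the bump makes the curvature positive on this diameter.
-/

open Topology Filter
open scoped InnerProductSpace

section Partials

variable {V : Type*} [NormedAddCommGroup V] [NormedSpace ℝ V]

/-- The partial derivative of `f` in its first variable, `0` where `f` is not differentiable;
written `∂₁ f`. -/
def partialX (f : ℝ × ℝ → V) (z : ℝ × ℝ) : V := fderiv ℝ f z (1, 0)

/-- The partial derivative of `f` in its second variable, `0` where `f` is not differentiable;
written `∂₂ f`. -/
def partialY (f : ℝ × ℝ → V) (z : ℝ × ℝ) : V := fderiv ℝ f z (0, 1)

notation "∂₁" => partialX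
notation "∂₂" => partialY

/-- `f` is differentiable at `z`, with partial derivatives `a` and `b`. -/
structure HasPartialsAt (f : ℝ × ℝ → V) (a b : V) (z : ℝ × ℝ) : Prop where
  differentiableAt : DifferentiableAt ℝ f z
  fst_eq : ∂₁ f z = a
  snd_eq : ∂₂ f z = b

variable {f g : ℝ × ℝ → V} {a b a' b' : V} {z : ℝ × ℝ}

lemma hasPartialsAt_of_hasFDerivAt {L : ℝ × ℝ →L[ℝ] V} (h : HasFDerivAt f L z)
    (ha : L (1, 0) = a) (hb : L (0, 1) = b) : HasPartialsAt f a b z :=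
  ⟨h.differentiableAt, by rw [partialX, h.fderiv, ha], by rw [partialY, h.fderiv, hb]⟩

lemma hasPartialsAt_of_differentiableAt (h : DifferentiableAt ℝ f z) :
    HasPartialsAt f (∂₁ f z) (∂₂ f z) z := ⟨h, rfl, rfl⟩

lemma hasPartialsAt_of_contDiffAt {n : WithTop ℕ∞} (hf : ContDiffAt ℝ n f z) (hn : n ≠ 0) :
    HasPartialsAt f (∂₁ f z) (∂₂ f z) z :=
  hasPartialsAt_of_differentiableAt (hf.differentiableAt hn)

lemma fderiv_apply_eq_partials (f : ℝ × ℝ → V) (z v : ℝ × ℝ) :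
    fderiv ℝ f z v = v.1 • ∂₁ f z + v.2 • ∂₂ f z := by
  conv_lhs => rw [show v = v.1 • (1, 0) + v.2 • (0, 1) by ext <;> simp]
  rw [map_add, map_smul, map_smul, partialX, partialY]

lemma contDiffAt_partialX {m n : WithTop ℕ∞} (hf : ContDiffAt ℝ n f z) (hmn : m + 1 ≤ n) :
    ContDiffAt ℝ m (∂₁ f) z := (hf.fderiv_right hmn).clm_apply contDiffAt_const

lemma contDiffAt_partialY {m n : WithTop ℕ∞} (hf : ContDiffAt ℝ n f z) (hmn : m + 1 ≤ n) :
    ContDiffAt ℝ m (∂₂ f) z := (hf.fderiv_right hmn).clm_apply contDiffAt_const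

/-- Reassembles a differential from the two partial derivatives. -/
def ofPartials : V × V →L[ℝ] ℝ × ℝ →L[ℝ] V :=
  (ContinuousLinearMap.smulRightL ℝ (ℝ × ℝ) V (ContinuousLinearMap.fst ℝ ℝ ℝ)).coprod
    (ContinuousLinearMap.smulRightL ℝ (ℝ × ℝ) V (ContinuousLinearMap.snd ℝ ℝ ℝ))

lemma fderiv_eq_ofPartials (f : ℝ × ℝ → V) :
    fderiv ℝ f = fun z => ofPartials (∂₁ f z, ∂₂ f z) := by
  ext1 z
  refine ContinuousLinearMap.ext fun v => ?_
  simp [ofPartials, fderiv_apply_eq_partials]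

lemma partialX_partialY_comm (hf : ∀ᶠ w in 𝓝 z, DifferentiableAt ℝ f w)
    (hx : DifferentiableAt ℝ (∂₁ f) z) (hy : DifferentiableAt ℝ (∂₂ f) z) :
    ∂₁ (∂₂ f) z = ∂₂ (∂₁ f) z := by
  have hd : HasFDerivAt (fderiv ℝ f) (ofPartials ∘L (fderiv ℝ (∂₁ f) z).prod (fderiv ℝ (∂₂ f) z))
      z := by
    rw [fderiv_eq_ofPartials]
    exact ofPartials.hasFDerivAt.comp z (hx.hasFDerivAt.prodMk hy.hasFDerivAt)
  simpa [ofPartials, partialX, partialY] using second_derivative_symmetric_of_eventually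
    (hf.mono fun w hw => hw.hasFDerivAt) hd (1, 0) (0, 1)

lemma hasPartialsAt_partialX (hf : ContDiffAt ℝ 2 f z) :
    HasPartialsAt (∂₁ f) (∂₁ (∂₁ f) z) (∂₂ (∂₁ f) z) z :=
  hasPartialsAt_of_contDiffAt (contDiffAt_partialX (m := 1) hf (by norm_num)) one_ne_zero

lemma hasPartialsAt_partialY (hf : ContDiffAt ℝ 2 f z) :
    HasPartialsAt (∂₂ f) (∂₂ (∂₁ f) z) (∂₂ (∂₂ f) z) z :=
  have hx := hasPartialsAt_partialX hf
  have hy := hasPartialsAt_of_contDiffAt (contDiffAt_partialY (m := 1) hf (by norm_num)) one_ne_zero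
  partialX_partialY_comm ((hf.eventually (by simp)).mono fun _ h => h.differentiableAt two_ne_zero)
    hx.differentiableAt hy.differentiableAt ▸ hy

lemma fderiv_fderiv_eq_ofPartials (hf : ContDiffAt ℝ 2 f z) : fderiv ℝ (fderiv ℝ f) z =
    ofPartials (ofPartials (∂₁ (∂₁ f) z, ∂₂ (∂₁ f) z), ofPartials (∂₂ (∂₁ f) z, ∂₂ (∂₂ f) z)) := by
  have hx := hasPartialsAt_partialX hf
  have hy := hasPartialsAt_partialY hf
  have hd := ofPartials.hasFDerivAt.comp z
    (hx.differentiableAt.hasFDerivAt.prodMk hy.differentiableAt.hasFDerivAt)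
  have hp : HasPartialsAt (fderiv ℝ f) (ofPartials (∂₁ (∂₁ f) z, ∂₁ (∂₂ f) z))
      (ofPartials (∂₂ (∂₁ f) z, ∂₂ (∂₂ f) z)) z := by
    rw [fderiv_eq_ofPartials f]
    exact hasPartialsAt_of_hasFDerivAt hd rfl rfl
  refine (congrFun (fderiv_eq_ofPartials (fderiv ℝ f)) z).trans ?_
  simp only [hp.fst_eq, hp.snd_eq, hy.fst_eq]

lemma contDiffAt_succ_of_partials {n : ℕ} {fx fy : ℝ × ℝ → V}
    (h : ∀ᶠ w in 𝓝 z, HasPartialsAt f (fx w) (fy w) w) (hx : ContDiffAt ℝ n fx z)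
    (hy : ContDiffAt ℝ n fy z) : ContDiffAt ℝ (n + 1) f z := by
  refine contDiffAt_succ_iff_hasFDerivAt.2 ⟨fderiv ℝ f,
    ⟨_, h, fun w hw => hw.differentiableAt.hasFDerivAt⟩, ?_⟩
  refine (ofPartials.contDiff.contDiffAt.comp z (hx.prodMk hy)).congr_of_eventuallyEq ?_
  filter_upwards [h] with w hw
  simp only [fderiv_eq_ofPartials, Function.comp_apply, hw.fst_eq, hw.snd_eq]

lemma partialX_congr (h : f =ᶠ[𝓝 z] g) : ∂₁ f z = ∂₁ g z := by
  rw [partialX, h.fderiv_eq, partialX]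

lemma partialY_congr (h : f =ᶠ[𝓝 z] g) : ∂₂ f z = ∂₂ g z := by
  rw [partialY, h.fderiv_eq, partialY]

namespace HasPartialsAt

lemma hasDerivAt_comp (h : HasPartialsAt f a b z) {γ : ℝ → ℝ × ℝ} {v : ℝ × ℝ} {t : ℝ}
    (hγ : HasDerivAt γ v t) (hz : γ t = z) :
    HasDerivAt (fun s => f (γ s)) (v.1 • a + v.2 • b) t := by
  subst hz
  rw [← h.fst_eq, ← h.snd_eq, ← fderiv_apply_eq_partials]
  exact h.differentiableAt.hasFDerivAt.comp_hasDerivAt t hγ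

lemma hasDerivAt_fst {x y : ℝ} (h : HasPartialsAt f a b (x, y)) :
    HasDerivAt (fun s => f (s, y)) a x := by
  simpa using h.hasDerivAt_comp ((hasDerivAt_id' x).prodMk (hasDerivAt_const x y)) rfl

lemma hasDerivAt_snd {x y : ℝ} (h : HasPartialsAt f a b (x, y)) :
    HasDerivAt (fun s => f (x, s)) b y := by
  simpa using h.hasDerivAt_comp ((hasDerivAt_const y x).prodMk (hasDerivAt_id' y)) rfl

lemma comp_graph {χ : ℝ × ℝ → ℝ} {c d : ℝ} (hf : HasPartialsAt f a b (χ z, z.2))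
    (hχ : HasPartialsAt χ c d z) :
    HasPartialsAt (fun w => f (χ w, w.2)) (c • a) (d • a + b) z := by
  refine hasPartialsAt_of_hasFDerivAt (hf.differentiableAt.hasFDerivAt.comp z
    (hχ.differentiableAt.hasFDerivAt.prodMk hasFDerivAt_snd)) ?_ ?_ <;>
  simp [fderiv_apply_eq_partials, hf.fst_eq, hf.snd_eq, hχ.fst_eq, hχ.snd_eq]

lemma fst (z : ℝ × ℝ) : HasPartialsAt Prod.fst (1 : ℝ) 0 z :=
  hasPartialsAt_of_hasFDerivAt hasFDerivAt_fst rfl rfl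

lemma snd (z : ℝ × ℝ) : HasPartialsAt Prod.snd (0 : ℝ) 1 z :=
  hasPartialsAt_of_hasFDerivAt hasFDerivAt_snd rfl rfl

lemma sub (hf : HasPartialsAt f a b z) (hg : HasPartialsAt g a' b' z) :
    HasPartialsAt (fun w => f w - g w) (a - a') (b - b') z := by
  refine hasPartialsAt_of_hasFDerivAt
    (hf.differentiableAt.hasFDerivAt.fun_sub hg.differentiableAt.hasFDerivAt) ?_ ?_ <;>
  simp [fderiv_apply_eq_partials, hf.fst_eq, hf.snd_eq, hg.fst_eq, hg.snd_eq]

lemma neg (hf : HasPartialsAt f a b z) : HasPartialsAt (fun w => -f w) (-a) (-b) z := by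
  refine hasPartialsAt_of_hasFDerivAt hf.differentiableAt.hasFDerivAt.fun_neg ?_ ?_ <;>
  simp [fderiv_apply_eq_partials, hf.fst_eq, hf.snd_eq]

lemma mul {f g : ℝ × ℝ → ℝ} {a b c d : ℝ} (hf : HasPartialsAt f a b z)
    (hg : HasPartialsAt g c d z) :
    HasPartialsAt (fun w => f w * g w) (a * g z + f z * c) (b * g z + f z * d) z := by
  refine hasPartialsAt_of_hasFDerivAt
    (hf.differentiableAt.hasFDerivAt.fun_mul hg.differentiableAt.hasFDerivAt) ?_ ?_ <;>
  simp [fderiv_apply_eq_partials, hf.fst_eq, hf.snd_eq, hg.fst_eq, hg.snd_eq] <;> ring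

lemma add (hf : HasPartialsAt f a b z) (hg : HasPartialsAt g a' b' z) :
    HasPartialsAt (fun w => f w + g w) (a + a') (b + b') z := by
  simpa using hf.sub hg.neg

lemma const (v : V) (z : ℝ × ℝ) : HasPartialsAt (fun _ => v) 0 0 z :=
  hasPartialsAt_of_hasFDerivAt (hasFDerivAt_const v z) rfl rfl

lemma const_mul {f : ℝ × ℝ → ℝ} {a b : ℝ} (k : ℝ) (hf : HasPartialsAt f a b z) :
    HasPartialsAt (fun w => k * f w) (k * a) (k * b) z := by
  simpa using (const k z).mul hf

lemma inner {V : Type*} [NormedAddCommGroup V] [InnerProductSpace ℝ V] {f g : ℝ × ℝ → V}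
    {a b a' b' : V} (hf : HasPartialsAt f a b z) (hg : HasPartialsAt g a' b' z) :
    HasPartialsAt (fun w => ⟪f w, g w⟫_ℝ) (⟪f z, a'⟫_ℝ + ⟪a, g z⟫_ℝ) (⟪f z, b'⟫_ℝ + ⟪b, g z⟫_ℝ)
      z := by
  refine hasPartialsAt_of_hasFDerivAt
    (hf.differentiableAt.hasFDerivAt.inner ℝ hg.differentiableAt.hasFDerivAt) ?_ ?_ <;>
  simp [fderiv_apply_eq_partials, hf.fst_eq, hf.snd_eq, hg.fst_eq, hg.snd_eq]

end HasPartialsAt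

end Partials

section PartialLegendre

variable {f φ : ℝ × ℝ → ℝ} {z₀ : ℝ × ℝ}

lemma exists_partial_inverse {n : WithTop ℕ∞} (hf : ContDiffAt ℝ n f z₀) (hn : n ≠ 0)
    (h : ∂₁ f z₀ ≠ 0) :
    ∃ χ : ℝ × ℝ → ℝ, ContDiffAt ℝ n χ (f z₀, z₀.2) ∧ χ (f z₀, z₀.2) = z₀.1 ∧
      ∀ᶠ w in 𝓝 (f z₀, z₀.2), f (χ w, w.2) = w.1 := by
  let F : ℝ × ℝ → ℝ × ℝ := fun z => (f z, z.2)
  let L : ℝ × ℝ →L[ℝ] ℝ × ℝ := (fderiv ℝ f z₀).prod (ContinuousLinearMap.snd ℝ ℝ ℝ)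
  have hL : LinearMap.ker (L : ℝ × ℝ →ₗ[ℝ] ℝ × ℝ) = ⊥ := by
    refine LinearMap.ker_eq_bot'.2 fun v hv => ?_
    obtain ⟨hv₁, hv₂⟩ := Prod.ext_iff.1 hv
    have hv₂ : v.2 = 0 := hv₂
    have hv₁ : v.1 = 0 := by
      simpa [L, fderiv_apply_eq_partials, hv₂, h] using hv₁
    exact Prod.ext hv₁ hv₂
  let e : (ℝ × ℝ) ≃L[ℝ] (ℝ × ℝ) :=
    (LinearEquiv.ofInjectiveEndo (L : ℝ × ℝ →ₗ[ℝ] ℝ × ℝ)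
      (LinearMap.ker_eq_bot.1 hL)).toContinuousLinearEquiv
  have hF : ContDiffAt ℝ n F z₀ := hf.prodMk contDiffAt_snd
  have hF' : HasFDerivAt F (e : ℝ × ℝ →L[ℝ] ℝ × ℝ) z₀ :=
    (hf.differentiableAt hn).hasFDerivAt.prodMk hasFDerivAt_snd
  let E := hF.toOpenPartialHomeomorph F hF' hn
  have hE : ∀ᶠ w in 𝓝 (F z₀), F (E.symm w) = w :=
    E.eventually_right_inverse (hF.image_mem_toOpenPartialHomeomorph_target hF' hn)
  refine ⟨fun w => (E.symm w).1, contDiffAt_fst.comp _ (hF.to_localInverse hF' hn),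
    congrArg Prod.fst (hF.localInverse_apply_image hF' hn), hE.mono fun w hw => ?_⟩
  obtain ⟨hw₁, hw₂⟩ := Prod.ext_iff.1 hw
  rw [← hw₁, ← hw₂]

/-- The witness is `H (p, y) = p x - φ (x, y)`, with `x` determined by `∂₁ φ (x, y) = p`. -/
lemma exists_partialLegendre (hφ : ContDiffAt ℝ 2 φ z₀) (h : ∂₁ (∂₁ φ) z₀ ≠ 0) :
    ∃ H : ℝ × ℝ → ℝ, ContDiffAt ℝ 2 H (∂₁ φ z₀, z₀.2) ∧ ∂₁ H (∂₁ φ z₀, z₀.2) = z₀.1 ∧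
      ∀ᶠ w in 𝓝 (∂₁ φ z₀, z₀.2), ∂₁ φ (∂₁ H w, w.2) = w.1 ∧
        ∂₁ (∂₁ H) w * ∂₁ (∂₁ φ) (∂₁ H w, w.2) = 1 ∧
        ∂₂ (∂₂ H) w * ∂₁ (∂₁ φ) (∂₁ H w, w.2) =
          ∂₂ (∂₁ φ) (∂₁ H w, w.2) ^ 2 -
            ∂₁ (∂₁ φ) (∂₁ H w, w.2) * ∂₂ (∂₂ φ) (∂₁ H w, w.2) := by
  obtain ⟨χ, hχ, hχ₀, hinv⟩ :=
    exists_partial_inverse (contDiffAt_partialX (m := 1) hφ (by norm_num)) one_ne_zero h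
  set w₀ : ℝ × ℝ := (∂₁ φ z₀, z₀.2)
  have hgraph : ContDiffAt ℝ 1 (fun w => (χ w, w.2)) w₀ := hχ.prodMk contDiffAt_snd
  have hgraph₀ : (χ w₀, w₀.2) = z₀ := Prod.ext hχ₀ rfl
  have hφev : ∀ᶠ w in 𝓝 w₀, ContDiffAt ℝ 2 φ (χ w, w.2) :=
    hgraph.continuousAt.eventually (by simpa only [hgraph₀] using hφ.eventually (by simp))
  have hχev : ∀ᶠ w in 𝓝 w₀, HasPartialsAt χ (∂₁ χ w) (∂₂ χ w) w :=
    (hχ.eventually (by simp)).mono fun w hw => hasPartialsAt_of_contDiffAt hw one_ne_zero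
  let H : ℝ × ℝ → ℝ := fun w => w.1 * χ w - φ (χ w, w.2)
  have hH : ∀ᶠ w in 𝓝 w₀, HasPartialsAt H (χ w) (-∂₂ φ (χ w, w.2)) w := by
    filter_upwards [hinv, hφev, hχev] with w hw hφw hχw
    convert ((HasPartialsAt.fst w).mul hχw).sub
      ((hasPartialsAt_of_contDiffAt hφw two_ne_zero).comp_graph hχw) using 1 <;>
    simp only [hw, smul_eq_mul] <;> ring
  have hHX : ∀ᶠ w in 𝓝 w₀, ∂₁ H =ᶠ[𝓝 w] χ :=
    (hH.mono fun w hw => hw.fst_eq).eventually_nhds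
  have hHY : ∀ᶠ w in 𝓝 w₀, ∂₂ H =ᶠ[𝓝 w] fun w => -∂₂ φ (χ w, w.2) :=
    (hH.mono fun w hw => hw.snd_eq).eventually_nhds
  have hφY : ContDiffAt ℝ 1 (fun w => ∂₂ φ (χ w, w.2)) w₀ :=
    ContDiffAt.comp w₀ (g := ∂₂ φ) (by
      simpa only [hgraph₀] using contDiffAt_partialY hφ (by norm_num)) hgraph
  refine ⟨H, contDiffAt_succ_of_partials (n := 1) hH hχ hφY.neg,
    hHX.self_of_nhds.self_of_nhds.trans hχ₀, ?_⟩
  filter_upwards [hinv.eventually_nhds, hφev, hχev, hHX, hHY] with w hw hφw hχw hXw hYw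
  have hcomp := (hasPartialsAt_partialX hφw).comp_graph hχw
  have hX : ∂₁ χ w * ∂₁ (∂₁ φ) (χ w, w.2) = 1 := by
    rw [← (HasPartialsAt.fst w).fst_eq, ← partialX_congr hw, hcomp.fst_eq, smul_eq_mul]
  have hY : ∂₂ χ w * ∂₁ (∂₁ φ) (χ w, w.2) + ∂₂ (∂₁ φ) (χ w, w.2) = 0 := by
    rw [← (HasPartialsAt.fst w).snd_eq, ← partialY_congr hw, hcomp.snd_eq, smul_eq_mul]
  rw [hXw.self_of_nhds, partialX_congr hXw, partialY_congr hYw,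
    ((hasPartialsAt_partialY hφw).comp_graph hχw).neg.snd_eq, smul_eq_mul]
  exact ⟨hw.self_of_nhds, hX, by linear_combination -∂₂ (∂₁ φ) (χ w, w.2) * hY⟩

end PartialLegendre

/-- The defining function of the closed Euclidean disc with centre `c` and radius `ρ`: it is
nonnegative on the disc and vanishes on its boundary circle. The product `ℝ × ℝ` carries the
sup norm, so this disc is not `Metric.closedBall c ρ`. -/
def discQ (c : ℝ × ℝ) (ρ : ℝ) (z : ℝ × ℝ) : ℝ := ρ ^ 2 - (z.1 - c.1) ^ 2 - (z.2 - c.2) ^ 2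

section LegendreObstruction

lemma eq_add_mul_of_hasDerivAt_const {f : ℝ → ℝ} {s : Set ℝ} {c x y : ℝ} (hs : Convex ℝ s)
    (hf : ∀ t ∈ s, HasDerivAt f c t) (hx : x ∈ s) (hy : y ∈ s) : f y = f x + c * (y - x) := by
  have hd (t : ℝ) (ht : t ∈ s) : HasDerivWithinAt (fun t => f t - c * t) 0 s t := by
    simpa using ((hf t ht).fun_sub ((hasDerivAt_id' t).const_mul c)).hasDerivWithinAt
  have := hs.norm_image_sub_le_of_norm_hasDerivWithin_le hd (C := 0) (by simp) hx hy
  rw [zero_mul, norm_le_zero_iff] at this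
  linarith

lemma second_difference_le {f f' f'' : ℝ → ℝ} {y l C : ℝ} (hl : 0 ≤ l)
    (hf : ∀ t ∈ Icc (y - l) (y + l), HasDerivAt f (f' t) t)
    (hf' : ∀ t ∈ Icc (y - l) (y + l), HasDerivAt f' (f'' t) t)
    (hC : ∀ t ∈ Icc (y - l) (y + l), f'' t ≤ C) :
    f (y + l) + f (y - l) - 2 * f y ≤ C * l ^ 2 := by
  have hmem (s : ℝ) (hs : s ∈ Icc 0 l) :
      y + s ∈ Icc (y - l) (y + l) ∧ y - s ∈ Icc (y - l) (y + l) :=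
    ⟨⟨by linarith [hs.1], by linarith [hs.2]⟩, ⟨by linarith [hs.2], by linarith [hs.1]⟩⟩
  have hf'_diff (s : ℝ) (hs : s ∈ Icc 0 l) : f' (y + s) - f' (y - s) ≤ C * (2 * s) := by
    have := (convex_Icc (y - l) (y + l)).image_sub_le_mul_sub_of_deriv_le
      (fun t ht => (hf' t ht).continuousAt.continuousWithinAt)
      (fun t ht => (hf' t (interior_subset ht)).differentiableAt.differentiableWithinAt)
      (fun t ht => (hf' t (interior_subset ht)).deriv.trans_le (hC t (interior_subset ht)))
      (y - s) (hmem s hs).2 (y + s) (hmem s hs).1 (by linarith [hs.1])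
    linarith
  have hanti : AntitoneOn (fun s => f (y + s) + f (y - s) - C * s ^ 2) (Icc 0 l) := by
    have hd (s : ℝ) (hs : s ∈ Icc 0 l) : HasDerivAt (fun s => f (y + s) + f (y - s) - C * s ^ 2)
        (f' (y + s) - f' (y - s) - C * (2 * s)) s := by
      have h₁ := (hf _ (hmem s hs).1).comp_const_add y s
      have h₂ := (hf _ (hmem s hs).2).comp_const_sub y s
      have h₃ := ((hasDerivAt_id' s).fun_pow 2).const_mul C
      exact ((h₁.fun_add h₂).fun_sub h₃).congr_deriv (by norm_num; ring)
    refine antitoneOn_of_hasDerivWithinAt_nonpos (convex_Icc _ _)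
      (fun s hs => (hd s hs).continuousAt.continuousWithinAt)
      (fun s hs => (hd s (interior_subset hs)).hasDerivWithinAt) fun s hs => ?_
    linarith [hf'_diff s (interior_subset hs)]
  have := hanti (left_mem_Icc.2 hl) (right_mem_Icc.2 hl) hl
  simp only [add_zero, sub_zero] at this
  linarith

lemma eventually_forall_abs_le_sqrt {P : ℝ × ℝ → Prop} {w : ℝ × ℝ} (η : ℝ)
    (h : ∀ᶠ z in 𝓝 w, P z) :
    ∀ᶠ d in 𝓝[>] (0 : ℝ), ∀ t, |t| ≤ √(η * d) → P (w.1 + d, w.2 + t) := by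
  obtain ⟨δ, hδ, hP⟩ := Metric.eventually_nhds_iff.1 h
  have hsqrt : ∀ᶠ d in 𝓝[>] (0 : ℝ), √(η * d) < δ := by
    have : Tendsto (fun d => √(η * d)) (𝓝 0) (𝓝 0) := by
      simpa using (Continuous.tendsto (by fun_prop : Continuous fun d => √(η * d)) 0)
    exact (this.eventually (gt_mem_nhds hδ)).filter_mono nhdsWithin_le_nhds
  filter_upwards [hsqrt, self_mem_nhdsWithin, Ioo_mem_nhdsGT hδ] with d hd hd₀ hdδ t ht
  refine hP ?_
  rw [Prod.dist_eq, Real.dist_eq, Real.dist_eq, add_sub_cancel_left, add_sub_cancel_left,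
    abs_of_pos hd₀]
  exact max_lt hdδ.2 (ht.trans_lt hd)

variable {H : ℝ × ℝ → ℝ} {w₀ : ℝ × ℝ}

lemma eventually_abs_taylor_le (hH : ContDiffAt ℝ 2 H w₀) {ε : ℝ} (hε : 0 < ε) :
    ∀ᶠ w in 𝓝 w₀,
      |∂₁ H w - ∂₁ H (w₀.1, w.2) - ∂₁ (∂₁ H) w₀ * (w.1 - w₀.1)| ≤ ε * |w.1 - w₀.1| ∧
      |H w - H (w₀.1, w.2) - ∂₁ H (w₀.1, w.2) * (w.1 - w₀.1) -
        ∂₁ (∂₁ H) w₀ / 2 * (w.1 - w₀.1) ^ 2| ≤ ε * (w.1 - w₀.1) ^ 2 := by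
  have hstrict := ((contDiffAt_partialX (m := 1) hH (by norm_num)).hasStrictFDerivAt
    one_ne_zero).isLittleO.def hε
  have hslice : ∀ᶠ w in 𝓝 w₀, HasPartialsAt H (∂₁ H w) (∂₂ H w) w ∧
      |∂₁ H w - ∂₁ H (w₀.1, w.2) - ∂₁ (∂₁ H) w₀ * (w.1 - w₀.1)| ≤ ε * |w.1 - w₀.1| := by
    have hline : Tendsto (fun w : ℝ × ℝ => (w, (w₀.1, w.2))) (𝓝 w₀) (𝓝 (w₀, w₀)) :=
      (by fun_prop : Continuous fun w : ℝ × ℝ => (w, (w₀.1, w.2))).tendsto w₀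
    filter_upwards [hline.eventually hstrict, hH.eventually (by simp)] with w hw hHw
    refine ⟨hasPartialsAt_of_contDiffAt hHw two_ne_zero, ?_⟩
    simpa [fderiv_apply_eq_partials, Prod.norm_def, mul_comm] using hw
  obtain ⟨δ, hδ, hball⟩ := Metric.eventually_nhds_iff_ball.1 hslice
  refine Metric.eventually_nhds_iff_ball.2 ⟨δ, hδ, fun ⟨p, y⟩ hw => ⟨(hball _ hw).2, ?_⟩⟩
  have hmem (t : ℝ) (ht : t ∈ uIcc w₀.1 p) : (t, y) ∈ ball w₀ δ ∧ |t - w₀.1| ≤ |p - w₀.1| := by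
    have htp : |t - w₀.1| ≤ |p - w₀.1| := abs_sub_left_of_mem_uIcc ht
    rw [mem_ball, Prod.dist_eq, max_lt_iff] at hw ⊢
    exact ⟨⟨htp.trans_lt hw.1, hw.2⟩, htp⟩
  have hd (t : ℝ) (ht : t ∈ uIcc w₀.1 p) : HasDerivWithinAt
      (fun t => H (t, y) - ∂₁ H (w₀.1, y) * (t - w₀.1) - ∂₁ (∂₁ H) w₀ / 2 * (t - w₀.1) ^ 2)
      (∂₁ H (t, y) - ∂₁ H (w₀.1, y) - ∂₁ (∂₁ H) w₀ * (t - w₀.1)) (uIcc w₀.1 p) t := by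
    have hsub := (hasDerivAt_id' t).sub_const w₀.1
    exact ((((hball _ (hmem t ht).1).1.hasDerivAt_fst.fun_sub (hsub.const_mul _)).fun_sub
      ((hsub.fun_pow 2).const_mul _)).congr_deriv (by norm_num; ring)).hasDerivWithinAt
  have hbound (t : ℝ) (ht : t ∈ uIcc w₀.1 p) :
      ‖∂₁ H (t, y) - ∂₁ H (w₀.1, y) - ∂₁ (∂₁ H) w₀ * (t - w₀.1)‖ ≤ ε * |p - w₀.1| :=
    (hball _ (hmem t ht).1).2.trans (mul_le_mul_of_nonneg_left (hmem t ht).2 hε.le)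
  have := (convex_uIcc w₀.1 p).norm_image_sub_le_of_norm_hasDerivWithin_le hd hbound
    left_mem_uIcc right_mem_uIcc
  rw [Real.norm_eq_abs, Real.norm_eq_abs, mul_assoc, abs_mul_abs_self] at this
  convert this using 2 <;> ring

lemma eventually_affine_of_partialY_flat (hH : ContDiffAt ℝ 2 H w₀)
    (hflat : ∀ᶠ w in 𝓝 w₀, w.1 ≤ w₀.1 → ∂₂ (∂₂ H) w = 0) :
    ∀ᶠ w in 𝓝 w₀, H (w₀.1, w.2) = H w₀ + ∂₂ H w₀ * (w.2 - w₀.2) ∧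
      ∂₁ H (w₀.1, w.2) = ∂₁ H w₀ + ∂₂ (∂₁ H) w₀ * (w.2 - w₀.2) := by
  obtain ⟨p₀, y₀⟩ := w₀
  obtain ⟨δ, hδ, hball⟩ := Metric.eventually_nhds_iff_ball.1 (hflat.and (hH.eventually (by simp)))
  rw [← ball_prod_same] at hball
  have hp₀ : p₀ ∈ ball p₀ δ := mem_ball_self hδ
  have hy₀ : y₀ ∈ ball y₀ δ := mem_ball_self hδ
  have hconst (p : ℝ) (hp : p ∈ ball p₀ δ) (hpp₀ : p ≤ p₀) (y : ℝ) (hy : y ∈ ball y₀ δ) :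
      ∂₂ H (p, y) = ∂₂ H (p, y₀) := by
    have := eq_add_mul_of_hasDerivAt_const (f := fun y => ∂₂ H (p, y)) (c := 0)
      (convex_ball y₀ δ) (fun t ht => ?_) hy₀ hy
    · simpa only [zero_mul, add_zero] using this
    · obtain ⟨hflat, hHt⟩ := hball (p, t) ⟨hp, ht⟩
      exact hflat hpp₀ ▸ (hasPartialsAt_partialY hHt).hasDerivAt_snd
  have hmixed (y : ℝ) (hy : y ∈ ball y₀ δ) : ∂₂ (∂₁ H) (p₀, y) = ∂₂ (∂₁ H) (p₀, y₀) := by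
    have hd (y : ℝ) (hy : y ∈ ball y₀ δ) : HasDerivWithinAt (fun p => ∂₂ H (p, y))
        (∂₂ (∂₁ H) (p₀, y)) (Iic p₀) p₀ :=
      (hasPartialsAt_partialY (hball (p₀, y) ⟨hp₀, hy⟩).2).hasDerivAt_fst.hasDerivWithinAt
    refine (uniqueDiffWithinAt_Iic p₀).eq_deriv _ (hd y hy) ((hd y₀ hy₀).congr_of_eventuallyEq ?_
      (hconst p₀ hp₀ le_rfl y hy))
    filter_upwards [self_mem_nhdsWithin, mem_nhdsWithin_of_mem_nhds (ball_mem_nhds p₀ hδ)]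
      with p hpp₀ hp using hconst p hp hpp₀ y hy
  filter_upwards [ball_mem_nhds (p₀, y₀) hδ] with ⟨p, y⟩ hy
  replace hy : y ∈ ball y₀ δ := (ball_prod_same p₀ y₀ δ ▸ hy).2
  constructor
  · refine eq_add_mul_of_hasDerivAt_const (f := fun y => H (p₀, y)) (convex_ball y₀ δ)
      (fun t ht => ?_) hy₀ hy
    rw [← hconst p₀ hp₀ le_rfl t ht]
    exact (hasPartialsAt_of_contDiffAt (hball (p₀, t) ⟨hp₀, ht⟩).2 two_ne_zero).hasDerivAt_snd
  · refine eq_add_mul_of_hasDerivAt_const (f := fun y => ∂₁ H (p₀, y)) (convex_ball y₀ δ)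
      (fun t ht => ?_) hy₀ hy
    rw [← hmixed t ht]
    exact (hasPartialsAt_partialX (hball (p₀, t) ⟨hp₀, ht⟩).2).hasDerivAt_snd

variable {c : ℝ × ℝ} {ρ : ℝ}

lemma tangent_of_discQ_nonpos {x₀ y₀ α : ℝ} (h₀ : discQ c ρ (x₀, y₀) = 0)
    (h : ∀ᶠ y in 𝓝 y₀, discQ c ρ (x₀ + α * (y - y₀), y) ≤ 0) :
    y₀ - c.2 = α * (c.1 - x₀) := by
  have hd : HasDerivAt (fun y => discQ c ρ (x₀ + α * (y - y₀), y))
      (2 * (α * (c.1 - x₀) - (y₀ - c.2))) y₀ := by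
    have h₁ := ((((hasDerivAt_id' y₀).sub_const y₀).const_mul α).const_add x₀).sub_const c.1
    have h₂ := (hasDerivAt_id' y₀).sub_const c.2
    exact (((h₁.fun_pow 2).const_sub (ρ ^ 2)).fun_sub (h₂.fun_pow 2)).congr_deriv
      (by norm_num; ring)
  have hmax : IsLocalMax (fun y => discQ c ρ (x₀ + α * (y - y₀), y)) y₀ := by
    simpa only [IsLocalMax, IsMaxFilter, sub_self, mul_zero, add_zero, h₀] using h
  linarith [hmax.hasDerivAt_eq_zero hd]

lemma discQ_near_tangent {x₀ y₀ α : ℝ} (h₀ : discQ c ρ (x₀, y₀) = 0)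
    (htan : y₀ - c.2 = α * (c.1 - x₀)) (s t : ℝ) :
    discQ c ρ (x₀ + α * t + s, y₀ + t) =
      2 * (c.1 - x₀) * s - 2 * (α * t) * s - s ^ 2 - (1 + α ^ 2) * t ^ 2 := by
  simp only [discQ] at h₀ ⊢
  linear_combination h₀ - 2 * t * htan

/-- Since `∂₁ H` grows linearly in `w.1 - w₀.1` while the tangent line leaves the disc only
quadratically, the graph of `∂₁ H` enters the disc along a parabolic window. -/
lemma exists_discQ_ge_on_parabola (hH : ContDiffAt ℝ 2 H w₀) (hm : 0 < ∂₁ (∂₁ H) w₀)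
    (hx : ∂₁ H w₀ < c.1) (h₀ : discQ c ρ (∂₁ H w₀, w₀.2) = 0) {α : ℝ}
    (htan : w₀.2 - c.2 = α * (c.1 - ∂₁ H w₀))
    (haff : ∀ᶠ w in 𝓝 w₀, ∂₁ H (w₀.1, w.2) = ∂₁ H w₀ + α * (w.2 - w₀.2)) :
    ∃ η > 0, ∃ κ > 0, ∀ᶠ d in 𝓝[>] (0 : ℝ), ∀ t, |t| ≤ √(η * d) →
      κ * d ≤ discQ c ρ (∂₁ H (w₀.1 + d, w₀.2 + t), w₀.2 + t) := by
  set m := ∂₁ (∂₁ H) w₀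
  set β := c.1 - ∂₁ H w₀
  have hβ : 0 < β := sub_pos.2 hx
  let η := β * m / (4 * (1 + α ^ 2))
  have hη : (1 + α ^ 2) * η = β * m / 4 := by simp only [η]; field_simp
  refine ⟨η, by positivity, β * m / 4, by positivity, ?_⟩
  have hsmall : ∀ᶠ z : ℝ × ℝ in 𝓝 w₀,
      |α * (z.2 - w₀.2)| < β / 4 ∧ 3 * m / 2 * (z.1 - w₀.1) < β / 2 :=
    (((by fun_prop : Continuous fun z : ℝ × ℝ => |α * (z.2 - w₀.2)|).tendsto' w₀ 0
      (by simp)).eventually_lt_const (by positivity)).and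
    (((by fun_prop : Continuous fun z : ℝ × ℝ => 3 * m / 2 * (z.1 - w₀.1)).tendsto' w₀ 0
      (by simp)).eventually_lt_const (by positivity))
  filter_upwards [self_mem_nhdsWithin, eventually_forall_abs_le_sqrt η
    (hsmall.and (haff.and (eventually_abs_taylor_le hH (half_pos hm))))] with d (hd : 0 < d) hP t ht
  obtain ⟨⟨hαt, hds⟩, hline, htaylor, -⟩ := hP t ht
  simp only [add_sub_cancel_left, hline, abs_of_pos hd] at hαt hds htaylor
  set s := ∂₁ H (w₀.1 + d, w₀.2 + t) - (∂₁ H w₀ + α * t)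
  have hs : m / 2 * d ≤ s ∧ s ≤ 3 * m / 2 * d := by
    obtain ⟨h₁, h₂⟩ := abs_le.1 htaylor
    constructor <;> linarith
  have ht2 : t ^ 2 ≤ η * d := sq_abs t ▸ (Real.le_sqrt (abs_nonneg t) (by positivity)).1 ht
  have hs₀ : 0 ≤ s := (by positivity : 0 ≤ m / 2 * d).trans hs.1
  calc β * m / 4 * d = β * (m / 2 * d) - (1 + α ^ 2) * (η * d) := by
        linear_combination d * hη
    _ ≤ β * s - (1 + α ^ 2) * t ^ 2 := by gcongr; exact hs.1
    _ ≤ 2 * β * s - 2 * (α * t) * s - s ^ 2 - (1 + α ^ 2) * t ^ 2 := by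
        nlinarith [mul_nonneg hs₀ (by linarith [le_abs_self (α * t)] : 0 ≤ β - 2 * (α * t) - s)]
    _ = discQ c ρ (∂₁ H (w₀.1 + d, w₀.2 + t), w₀.2 + t) := by
        rw [← discQ_near_tangent h₀ htan, add_sub_cancel]

lemma eventually_le_second_difference_of_affine (hH : ContDiffAt ℝ 2 H w₀) {ψ α : ℝ}
    (haff : ∀ᶠ w in 𝓝 w₀, H (w₀.1, w.2) = H w₀ + ψ * (w.2 - w₀.2) ∧
      ∂₁ H (w₀.1, w.2) = ∂₁ H w₀ + α * (w.2 - w₀.2)) (η : ℝ) {ε : ℝ} (hε : 0 < ε) :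
    ∀ᶠ d in 𝓝[>] (0 : ℝ), -(4 * ε * d ^ 2) ≤ H (w₀.1 + d, w₀.2 + √(η * d)) +
      H (w₀.1 + d, w₀.2 - √(η * d)) - 2 * H (w₀.1 + d, w₀.2) := by
  filter_upwards [eventually_forall_abs_le_sqrt η
    (haff.and (eventually_abs_taylor_le hH hε))] with d hd
  set l := √(η * d)
  have hl : 0 ≤ l := Real.sqrt_nonneg _
  have htaylor (t : ℝ) (ht : |t| ≤ l) : |H (w₀.1 + d, w₀.2 + t) - (H w₀ + ψ * t) -
      (∂₁ H w₀ + α * t) * d - ∂₁ (∂₁ H) w₀ / 2 * d ^ 2| ≤ ε * d ^ 2 := by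
    obtain ⟨⟨hline, hline'⟩, -, h⟩ := hd t ht
    simpa only [hline, hline', add_sub_cancel_left] using h
  have hplus := abs_le.1 (htaylor l (abs_of_nonneg hl).le)
  have hminus := abs_le.1 (htaylor (-l) (abs_neg l ▸ (abs_of_nonneg hl).le))
  have hmid := abs_le.1 (htaylor 0 (abs_zero.trans_le hl))
  rw [← sub_eq_add_neg] at hminus
  rw [add_zero] at hmid
  linarith [hplus.1, hminus.1, hmid.2]

/-- For `p ≤ w₀.1` the function `H (p, ·)` is affine, so its second difference on the line
`p = w₀.1 + d` over the parabolic window is `o(d²)`; but there `hsteep` makes it at most `-C d²`. -/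
lemma partialLegendre_obstruction (hH : ContDiffAt ℝ 2 H w₀) (hm : 0 < ∂₁ (∂₁ H) w₀)
    (hρ : 0 < ρ) (hx : ∂₁ H w₀ ≤ c.1) (h₀ : discQ c ρ (∂₁ H w₀, w₀.2) = 0)
    (hleft : ∀ᶠ w in 𝓝 w₀, w.1 ≤ w₀.1 → discQ c ρ (∂₁ H w, w.2) ≤ 0)
    (hflat : ∀ᶠ w in 𝓝 w₀, discQ c ρ (∂₁ H w, w.2) ≤ 0 → ∂₂ (∂₂ H) w = 0) {k : ℝ} (hk : 0 < k)
    (hsteep : ∀ᶠ w in 𝓝 w₀, ∂₂ (∂₂ H) w ≤ -(k * discQ c ρ (∂₁ H w, w.2))) : False := by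
  have haff := eventually_affine_of_partialY_flat hH
    (hleft.mp (hflat.mono fun w hw hw' hle => hw (hw' hle)))
  have htan : w₀.2 - c.2 = ∂₂ (∂₁ H) w₀ * (c.1 - ∂₁ H w₀) := by
    refine tangent_of_discQ_nonpos h₀ ?_
    have hline : Tendsto (fun y => (w₀.1, y)) (𝓝 w₀.2) (𝓝 w₀) :=
      (by fun_prop : Continuous fun y : ℝ => (w₀.1, y)).tendsto w₀.2
    filter_upwards [hline.eventually (hleft.and haff)] with y ⟨hy, _, hχ⟩
    exact hχ ▸ hy le_rfl
  have hx' : ∂₁ H w₀ < c.1 := by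
    refine hx.lt_of_ne fun h => ?_
    simp only [discQ, htan, h, sub_self, mul_zero] at h₀
    nlinarith
  obtain ⟨η, hη, κ, hκ, hQ⟩ := exists_discQ_ge_on_parabola hH hm hx' h₀ htan
    (haff.mono fun w hw => hw.2)
  have hlower := eventually_le_second_difference_of_affine hH haff η
    (by positivity : 0 < k * κ * η / 8)
  obtain ⟨d, ⟨⟨hlower, hQd⟩, hsteep⟩, hd : 0 < d⟩ := (((hlower.and hQ).and
    (eventually_forall_abs_le_sqrt η (hsteep.and (hH.eventually (by simp))))).and
    eventually_mem_nhdsWithin).exists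
  have hwin (y : ℝ) (hy : y ∈ Icc (w₀.2 - √(η * d)) (w₀.2 + √(η * d))) :
      ContDiffAt ℝ 2 H (w₀.1 + d, y) ∧ ∂₂ (∂₂ H) (w₀.1 + d, y) ≤ -(k * (κ * d)) := by
    have ht : |y - w₀.2| ≤ √(η * d) := abs_sub_le_iff.2 ⟨by linarith [hy.2], by linarith [hy.1]⟩
    have hdisc := hQd _ ht
    obtain ⟨hle, hHt⟩ := hsteep _ ht
    rw [add_sub_cancel] at hdisc hle hHt
    exact ⟨hHt, hle.trans (by gcongr)⟩
  have hupper := second_difference_le (f := fun y => H (w₀.1 + d, y)) (Real.sqrt_nonneg _)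
    (fun y hy => (hasPartialsAt_of_contDiffAt (hwin y hy).1 two_ne_zero).hasDerivAt_snd)
    (fun y hy => (hasPartialsAt_partialY (hwin y hy).1).hasDerivAt_snd) fun y hy => (hwin y hy).2
  rw [Real.sq_sqrt (by positivity)] at hupper
  nlinarith [(by positivity : 0 < k * κ * η * d ^ 2)]

end LegendreObstruction

section Disc

variable {c : ℝ × ℝ} {ρ : ℝ}

lemma continuous_discQ (c : ℝ × ℝ) (ρ : ℝ) : Continuous (discQ c ρ) := by
  unfold discQ
  fun_prop

lemma isCompact_discQ_nonneg (c : ℝ × ℝ) (ρ : ℝ) : IsCompact {z | 0 ≤ discQ c ρ z} := by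
  refine (isCompact_closedBall c |ρ|).of_isClosed_subset
    (isClosed_le continuous_const (continuous_discQ c ρ)) fun z (hz : 0 ≤ discQ c ρ z) => ?_
  simp only [discQ] at hz
  rw [mem_closedBall, Prod.dist_eq, Real.dist_eq, Real.dist_eq]
  exact max_le (sq_le_sq.1 (by linarith [sq_nonneg (z.2 - c.2)]))
    (sq_le_sq.1 (by linarith [sq_nonneg (z.1 - c.1)]))

lemma convex_discQ_nonneg_slice (c : ℝ × ℝ) (ρ y : ℝ) : Convex ℝ {x | 0 ≤ discQ c ρ (x, y)} := by
  refine OrdConnected.convex ⟨fun x hx x' hx' s hs => ?_⟩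
  simp only [mem_ofPred_eq, discQ] at hx hx' ⊢
  rcases le_total s c.1 with h | h
  · nlinarith [hs.1]
  · nlinarith [hs.2]

lemma exists_min_on_left_arc {f : ℝ × ℝ → ℝ}
    (hf : ∀ z, 0 ≤ discQ c ρ z → DifferentiableAt ℝ f z)
    (hpos : ∀ z, 0 ≤ discQ c ρ z → 0 < ∂₁ f z) :
    ∃ q, discQ c ρ q = 0 ∧ q.1 ≤ c.1 ∧ ∀ z, 0 < discQ c ρ z → f q < f z := by
  obtain ⟨q, hq, hmin⟩ := (isCompact_discQ_nonneg c ρ).exists_isMinOn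
    ⟨c, by simp [discQ, sq_nonneg]⟩ fun z hz => (hf z hz).continuousAt.continuousWithinAt
  have hmono (y : ℝ) : StrictMonoOn (fun x => f (x, y)) {x | 0 ≤ discQ c ρ (x, y)} := by
    have hd (x : ℝ) (hx : 0 ≤ discQ c ρ (x, y)) :
        HasDerivAt (fun x => f (x, y)) (∂₁ f (x, y)) x :=
      (hasPartialsAt_of_differentiableAt (hf _ hx)).hasDerivAt_fst
    have hint : interior {x | 0 ≤ discQ c ρ (x, y)} ⊆ {x | 0 ≤ discQ c ρ (x, y)} := interior_subset
    exact strictMonoOn_of_hasDerivWithinAt_pos (convex_discQ_nonneg_slice c ρ y)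
      (fun x hx => (hd x hx).continuousAt.continuousWithinAt)
      (fun x hx => (hd x (hint hx)).hasDerivWithinAt) fun x hx => hpos _ (hint hx)
  have hlt (z : ℝ × ℝ) (hz : 0 < discQ c ρ z) : f q < f z := by
    have hnear : ∀ᶠ x in 𝓝[<] z.1, 0 < discQ c ρ (x, z.2) :=
      (((continuous_discQ c ρ).comp (by fun_prop : Continuous fun x => (x, z.2))).continuousAt
        (x := z.1)).eventually_const_lt hz |>.filter_mono nhdsWithin_le_nhds
    obtain ⟨x, hx, hxz⟩ := (hnear.and self_mem_nhdsWithin).exists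
    exact (hmin (a := (x, z.2)) hx.le).trans_lt (hmono z.2 hx.le hz.le hxz)
  refine ⟨q, (le_of_not_gt fun h => (hlt q h).false).antisymm hq, le_of_not_gt fun hqc => ?_, hlt⟩
  have hmirror : 0 ≤ discQ c ρ (2 * c.1 - q.1, q.2) := by
    convert hq.out using 1
    simp only [discQ]
    ring
  exact (hmono q.2 hmirror hq (show 2 * c.1 - q.1 < q.1 by linarith)).not_ge (hmin hmirror)

lemma det_hessian_ne_max_discQ_mul {φ G : ℝ × ℝ → ℝ} {Ω : Set (ℝ × ℝ)} (hΩ : IsOpen Ω)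
    (hφ : ContDiffOn ℝ 2 φ Ω) (hρ : 0 < ρ) (hsub : ∀ z, 0 ≤ discQ c ρ z → z ∈ Ω)
    (hpos : ∀ z, 0 ≤ discQ c ρ z → 0 < ∂₁ (∂₁ φ) z) (hG : ContinuousOn G Ω)
    (hGpos : ∀ z, discQ c ρ z = 0 → 0 < G z) :
    ¬ ∀ z ∈ Ω, ∂₁ (∂₁ φ) z * ∂₂ (∂₂ φ) z - ∂₂ (∂₁ φ) z ^ 2 = max (discQ c ρ z) 0 * G z := by
  intro hdet
  have hC2 (z : ℝ × ℝ) (hz : z ∈ Ω) : ContDiffAt ℝ 2 φ z := hφ.contDiffAt (hΩ.mem_nhds hz)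
  obtain ⟨q, hq, hqc, hlt⟩ := exists_min_on_left_arc
    (fun z hz => (hasPartialsAt_partialX (hC2 z (hsub z hz))).differentiableAt) hpos
  have hqΩ := hsub q hq.ge
  have hxx := hpos q hq.ge
  obtain ⟨H, hH, hHq, hLegendre⟩ := exists_partialLegendre (hC2 q hqΩ) hxx.ne'
  set w₀ : ℝ × ℝ := (∂₁ φ q, q.2)
  have hlim : Tendsto (fun w => (∂₁ H w, w.2)) (𝓝 w₀) (𝓝 q) := by
    have := (contDiffAt_partialX (m := 1) hH (by norm_num)).continuousAt.prodMk
      (continuousAt_snd (p := w₀))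
    rwa [ContinuousAt, hHq] at this
  set k := G q / ∂₁ (∂₁ φ) q
  have hk : 0 < k := div_pos (hGpos q hq) hxx
  have hxx_cont : ContinuousAt (∂₁ (∂₁ φ)) q :=
    (contDiffAt_partialX (m := 0) (contDiffAt_partialX (m := 1) (hC2 q hqΩ) (by norm_num))
      (by norm_num)).continuousAt
  have hnear : ∀ᶠ z in 𝓝 q, z ∈ Ω ∧ 0 < ∂₁ (∂₁ φ) z ∧ k / 2 < G z / ∂₁ (∂₁ φ) z :=
    (hΩ.eventually_mem hqΩ).and ((hxx_cont.eventually_const_lt hxx).and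
      (((hG.continuousAt (hΩ.mem_nhds hqΩ)).div hxx_cont hxx.ne').eventually_const_lt
        (half_lt_self hk)))
  have hYY : ∀ᶠ w in 𝓝 w₀, ∃ K > k / 2,
      ∂₂ (∂₂ H) w = -(max (discQ c ρ (∂₁ H w, w.2)) 0 * K) := by
    filter_upwards [hLegendre, hlim.eventually hnear] with w ⟨_, _, hw⟩ ⟨hΩw, hxxw, hKw⟩
    refine ⟨_, hKw, ?_⟩
    rw [← mul_div_assoc, ← hdet _ hΩw, ← neg_div, eq_div_iff hxxw.ne', hw]
    ring
  refine partialLegendre_obstruction hH ?_ hρ (hHq.trans_le hqc) (hHq.symm ▸ hq) ?_ ?_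
    (half_pos hk) ?_
  · have := hLegendre.self_of_nhds.2.1
    rw [hHq] at this
    exact pos_of_mul_pos_left (this ▸ one_pos) hxx.le
  · filter_upwards [hLegendre] with w hw hle
    exact le_of_not_gt fun h => (hlt _ h).not_ge (hw.1.trans_le hle)
  · filter_upwards [hYY] with w ⟨K, _, hw⟩ hQ
    rw [hw, max_eq_right hQ, zero_mul, neg_zero]
  · filter_upwards [hYY] with w ⟨K, hK, hw⟩
    rw [hw, neg_le_neg_iff, mul_comm (k / 2)]
    exact mul_le_mul (le_max_left _ _) hK.le (half_pos hk).le (le_max_right _ _)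

end Disc

section Conformal

variable {V : Type*} [NormedAddCommGroup V] [InnerProductSpace ℝ V]

lemma hasFDerivAt_inner_of_eq_zero {E : Type*} [NormedAddCommGroup E] [NormedSpace ℝ E]
    {f c : E → V} {L : E →L[ℝ] V} {z : E} (hf : HasFDerivAt f L z) (h0 : f z = 0)
    (hc : ContinuousAt c z) :
    HasFDerivAt (fun w => ⟪f w, c w⟫_ℝ) ((innerSL ℝ (c z)).comp L) z := by
  have hrem : (fun w => ⟪f w, c w - c z⟫_ℝ) =o[𝓝 z] fun w => w - z := by
    have hO : f =O[𝓝 z] fun w => w - z := by simpa [h0] using hf.isBigO_sub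
    have ho : (fun w => c w - c z) =o[𝓝 z] fun _ => (1 : ℝ) :=
      (Asymptotics.isLittleO_one_iff ℝ).2 (tendsto_sub_nhds_zero_iff.2 hc)
    have hbound : (fun w => ⟪f w, c w - c z⟫_ℝ) =O[𝓝 z] fun w => ‖f w‖ * ‖c w - c z‖ :=
      .of_norm_le fun w => norm_inner_le_norm _ _
    refine (hbound.trans_isLittleO (hO.norm_norm.mul_isLittleO ho.norm_left)).trans_isBigO ?_
    simpa using (Asymptotics.isBigO_refl (fun w => w - z) (𝓝 z)).norm_left
  have hmain := ((innerSL ℝ (c z)).hasFDerivAt.comp z hf).isLittleO.add hrem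
  refine .of_isLittleO (hmain.congr_left fun w => ?_)
  simp only [Function.comp_apply, innerSL_apply_apply, ContinuousLinearMap.comp_apply, h0,
    inner_zero_right, inner_sub_right, real_inner_comm (c z)]
  ring

lemma HasPartialsAt.inner_of_eq_zero {f c : ℝ × ℝ → V} {a b : V} {z : ℝ × ℝ}
    (hf : HasPartialsAt f a b z) (h0 : f z = 0) (hc : ContinuousAt c z) :
    HasPartialsAt (fun w => ⟪f w, c w⟫_ℝ) ⟪c z, a⟫_ℝ ⟪c z, b⟫_ℝ z :=
  hasPartialsAt_of_hasFDerivAt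
    (hasFDerivAt_inner_of_eq_zero hf.differentiableAt.hasFDerivAt h0 hc)
    (congrArg (innerSL ℝ (c z)) hf.fst_eq) (congrArg (innerSL ℝ (c z)) hf.snd_eq)

/-- `U` is a `C²` immersion of the open set `Ω` inducing the metric `l (dx² + dy²)`, where the
conformal factor `l` is positive and `C²`. -/
structure IsConformal (U : ℝ × ℝ → V) (l : ℝ × ℝ → ℝ) (Ω : Set (ℝ × ℝ)) : Prop where
  isOpen : IsOpen Ω
  contDiffOn : ContDiffOn ℝ 2 U Ω
  contDiffOn_factor : ContDiffOn ℝ 2 l Ω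
  factor_pos : ∀ z ∈ Ω, 0 < l z
  inner_X_X : ∀ z ∈ Ω, ⟪∂₁ U z, ∂₁ U z⟫_ℝ = l z
  inner_Y_Y : ∀ z ∈ Ω, ⟪∂₂ U z, ∂₂ U z⟫_ℝ = l z
  inner_X_Y : ∀ z ∈ Ω, ⟪∂₁ U z, ∂₂ U z⟫_ℝ = 0

namespace IsConformal

variable {U : ℝ × ℝ → V} {l : ℝ × ℝ → ℝ} {Ω W : Set (ℝ × ℝ)} {z : ℝ × ℝ}

lemma mono (h : IsConformal U l Ω) (hW : IsOpen W) (hWΩ : W ⊆ Ω) : IsConformal U l W where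
  isOpen := hW
  contDiffOn := h.contDiffOn.mono hWΩ
  contDiffOn_factor := h.contDiffOn_factor.mono hWΩ
  factor_pos z hz := h.factor_pos z (hWΩ hz)
  inner_X_X z hz := h.inner_X_X z (hWΩ hz)
  inner_Y_Y z hz := h.inner_Y_Y z (hWΩ hz)
  inner_X_Y z hz := h.inner_X_Y z (hWΩ hz)

lemma contDiffAt (h : IsConformal U l Ω) (hz : z ∈ Ω) : ContDiffAt ℝ 2 U z :=
  h.contDiffOn.contDiffAt (h.isOpen.mem_nhds hz)

lemma contDiffAt_factor (h : IsConformal U l Ω) (hz : z ∈ Ω) : ContDiffAt ℝ 2 l z :=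
  h.contDiffOn_factor.contDiffAt (h.isOpen.mem_nhds hz)

lemma inner_second_eq (h : IsConformal U l Ω) (hz : z ∈ Ω) :
    (⟪∂₁ U z, ∂₁ (∂₁ U) z⟫_ℝ = ∂₁ l z / 2 ∧ ⟪∂₂ U z, ∂₁ (∂₁ U) z⟫_ℝ = -∂₂ l z / 2) ∧
    (⟪∂₁ U z, ∂₂ (∂₁ U) z⟫_ℝ = ∂₂ l z / 2 ∧ ⟪∂₂ U z, ∂₂ (∂₁ U) z⟫_ℝ = ∂₁ l z / 2) ∧
    (⟪∂₁ U z, ∂₂ (∂₂ U) z⟫_ℝ = -∂₁ l z / 2 ∧ ⟪∂₂ U z, ∂₂ (∂₂ U) z⟫_ℝ = ∂₂ l z / 2) := by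
  have hX := hasPartialsAt_partialX (h.contDiffAt hz)
  have hY := hasPartialsAt_partialY (h.contDiffAt hz)
  have hn := h.isOpen.mem_nhds hz
  have hXX := hX.inner hX
  have hYY := hY.inner hY
  have hXY := hX.inner hY
  have hXX₁ := hXX.fst_eq.symm.trans (partialX_congr (eventually_of_mem hn h.inner_X_X))
  have hXX₂ := hXX.snd_eq.symm.trans (partialY_congr (eventually_of_mem hn h.inner_X_X))
  have hYY₁ := hYY.fst_eq.symm.trans (partialX_congr (eventually_of_mem hn h.inner_Y_Y))
  have hYY₂ := hYY.snd_eq.symm.trans (partialY_congr (eventually_of_mem hn h.inner_Y_Y))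
  have hXY₁ := (hXY.fst_eq.symm.trans (partialX_congr (eventually_of_mem hn h.inner_X_Y))).trans
    (HasPartialsAt.const (0 : ℝ) z).fst_eq
  have hXY₂ := (hXY.snd_eq.symm.trans (partialY_congr (eventually_of_mem hn h.inner_X_Y))).trans
    (HasPartialsAt.const (0 : ℝ) z).snd_eq
  simp only [real_inner_comm (∂₁ U z), real_inner_comm (∂₂ U z)] at *
  refine ⟨⟨?_, ?_⟩, ⟨?_, ?_⟩, ?_, ?_⟩ <;> linarith

/-- The third derivatives in the classical proof of the Gauss equation do not exist here. Instead
`w ↦ ⟪∂₁ U z, ∂₂ U w⟫`, for fixed `z`, is twice differentiable at `z`, and its mixed second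
derivatives, computed in the two orders from `inner_second_eq`, must agree. -/
lemma gauss (h : IsConformal U l Ω) (hz : z ∈ Ω) :
    ⟪∂₁ (∂₁ U) z, ∂₂ (∂₂ U) z⟫_ℝ - ⟪∂₂ (∂₁ U) z, ∂₂ (∂₁ U) z⟫_ℝ =
      -(∂₁ (∂₁ l) z + ∂₂ (∂₂ l) z) / 2 := by
  set β : ℝ × ℝ → ℝ := fun w => ⟪∂₁ U z, ∂₂ U w⟫_ℝ
  have hX₀ : HasPartialsAt (fun w => ∂₁ U w - ∂₁ U z) (∂₁ (∂₁ U) z) (∂₂ (∂₁ U) z) z := by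
    simpa using (hasPartialsAt_partialX (h.contDiffAt hz)).sub (HasPartialsAt.const _ z)
  have hUY := contDiffAt_partialY (m := 1) (h.contDiffAt hz) (by norm_num)
  have hUX := contDiffAt_partialX (m := 1) (h.contDiffAt hz) (by norm_num)
  have hβ : ∀ᶠ w in 𝓝 z, HasPartialsAt β ⟪∂₁ U z, ∂₂ (∂₁ U) w⟫_ℝ ⟪∂₁ U z, ∂₂ (∂₂ U) w⟫_ℝ w := by
    filter_upwards [h.isOpen.mem_nhds hz] with w hw
    simpa using (HasPartialsAt.const (∂₁ U z) w).inner (hasPartialsAt_partialY (h.contDiffAt hw))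
  have hβ₁ : ∂₁ β =ᶠ[𝓝 z] fun w =>
      1 / 2 * ∂₂ l w - ⟪∂₁ U w - ∂₁ U z, ∂₂ (∂₁ U) w⟫_ℝ := by
    filter_upwards [hβ, h.isOpen.mem_nhds hz] with w hβw hw
    rw [hβw.fst_eq, inner_sub_left, (h.inner_second_eq hw).2.1.1]
    ring
  have hβ₂ : ∂₂ β =ᶠ[𝓝 z] fun w =>
      -1 / 2 * ∂₁ l w - ⟪∂₁ U w - ∂₁ U z, ∂₂ (∂₂ U) w⟫_ℝ := by
    filter_upwards [hβ, h.isOpen.mem_nhds hz] with w hβw hw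
    rw [hβw.snd_eq, inner_sub_left, (h.inner_second_eq hw).2.2.1]
    ring
  have hp₁ := ((hasPartialsAt_partialY (h.contDiffAt_factor hz)).const_mul (1 / 2)).sub
    (hX₀.inner_of_eq_zero (sub_self _)
      (contDiffAt_partialY (m := 0) hUX (by norm_num)).continuousAt)
  have hp₂ := ((hasPartialsAt_partialX (h.contDiffAt_factor hz)).const_mul (-1 / 2)).sub
    (hX₀.inner_of_eq_zero (sub_self _)
      (contDiffAt_partialY (m := 0) hUY (by norm_num)).continuousAt)
  have hcomm := partialX_partialY_comm (hβ.mono fun _ hw => hw.differentiableAt)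
    (hp₁.differentiableAt.congr_of_eventuallyEq hβ₁)
    (hp₂.differentiableAt.congr_of_eventuallyEq hβ₂)
  rw [partialX_congr hβ₂, partialY_congr hβ₁, hp₁.snd_eq, hp₂.fst_eq,
    real_inner_comm (∂₁ (∂₁ U) z)] at hcomm
  linarith

end IsConformal

end Conformal

section Normal

/-- Euclidean 3-space. -/
abbrev E3 := EuclideanSpace ℝ (Fin 3)

/-- The cross product of vectors of Euclidean 3-space. -/
def cross (a b : E3) : E3 := WithLp.toLp 2 (a.ofLp ⨯₃ b.ofLp)

lemma inner_cross_eq (v a b : E3) : ⟪v, cross a b⟫_ℝ = v 0 * (a 1 * b 2 - a 2 * b 1) +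
    v 1 * (a 2 * b 0 - a 0 * b 2) + v 2 * (a 0 * b 1 - a 1 * b 0) := by
  simp [cross, cross_apply, PiLp.inner_apply, Fin.sum_univ_three, mul_comm]

lemma inner_left_cross (a b : E3) : ⟪a, cross a b⟫_ℝ = 0 := by
  rw [inner_cross_eq]
  ring

lemma continuous_cross : Continuous fun p : E3 × E3 => cross p.1 p.2 := by
  simp only [cross, cross_apply]
  fun_prop

lemma inner_cross_cross (a b c d : E3) :
    ⟪cross a b, cross c d⟫_ℝ = ⟪a, c⟫_ℝ * ⟪b, d⟫_ℝ - ⟪a, d⟫_ℝ * ⟪b, c⟫_ℝ := by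
  simp only [cross, EuclideanSpace.inner_eq_star_dotProduct, star_trivial, cross_dot_cross,
    dotProduct_comm c.ofLp, dotProduct_comm d.ofLp]
  ring

lemma inner_cross_mul_inner_cross (u v a b c d : E3) :
    ⟪u, cross a b⟫_ℝ * ⟪v, cross c d⟫_ℝ = Matrix.det
      !![⟪u, v⟫_ℝ, ⟪u, c⟫_ℝ, ⟪u, d⟫_ℝ; ⟪a, v⟫_ℝ, ⟪a, c⟫_ℝ, ⟪a, d⟫_ℝ;
        ⟪b, v⟫_ℝ, ⟪b, c⟫_ℝ, ⟪b, d⟫_ℝ] := by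
  rw [inner_cross_eq, inner_cross_eq, det_fin_three]
  simp only [PiLp.inner_apply, Fin.sum_univ_three,
    RCLike.inner_apply, conj_trivial, of_apply, cons_val', cons_val_zero, cons_val_fin_one,
    cons_val_one, cons_val]
  ring

/-- The (unnormalised) normal field `∂₁ U × ∂₂ U` of a parametrised surface. The coefficients of
the second fundamental form, up to the factor `‖∂₁ U × ∂₂ U‖`, are its inner products with the
second derivatives of `U`. -/
def normal (U : ℝ × ℝ → E3) (z : ℝ × ℝ) : E3 := cross (∂₁ U z) (∂₂ U z)

lemma continuousAt_normal {U : ℝ × ℝ → E3} {z : ℝ × ℝ} (hU : ContDiffAt ℝ 1 U z) :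
    ContinuousAt (normal U) z := by
  have hX := (contDiffAt_partialX (m := 0) hU (by norm_num)).continuousAt
  have hY := (contDiffAt_partialY (m := 0) hU (by norm_num)).continuousAt
  have hcomp : ContinuousAt ((fun p : E3 × E3 => cross p.1 p.2) ∘ fun w => (∂₁ U w, ∂₂ U w)) z :=
    continuous_cross.continuousAt.comp (hX.prodMk hY)
  exact hcomp

namespace IsConformal

variable {U : ℝ × ℝ → E3} {l : ℝ × ℝ → ℝ} {Ω : Set (ℝ × ℝ)} {z : ℝ × ℝ}

lemma inner_normal_mul_inner_normal (h : IsConformal U l Ω) (hz : z ∈ Ω) (v w : E3) :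
    ⟪v, normal U z⟫_ℝ * ⟪w, normal U z⟫_ℝ = l z ^ 2 * ⟪v, w⟫_ℝ -
      l z * (⟪∂₁ U z, v⟫_ℝ * ⟪∂₁ U z, w⟫_ℝ + ⟪∂₂ U z, v⟫_ℝ * ⟪∂₂ U z, w⟫_ℝ) := by
  rw [normal, inner_cross_mul_inner_cross, det_fin_three]
  simp only [of_apply, cons_val', cons_val_zero, cons_val_fin_one, cons_val_one, cons_val,
    real_inner_comm (∂₁ U z), real_inner_comm (∂₂ U z) v, h.inner_X_X z hz, h.inner_Y_Y z hz,
    h.inner_X_Y z hz]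
  ring

lemma inner_normal_self_pos (h : IsConformal U l Ω) (hz : z ∈ Ω) :
    0 < ⟪normal U z, normal U z⟫_ℝ := by
  rw [normal, inner_cross_cross, h.inner_X_X z hz, h.inner_Y_Y z hz, h.inner_X_Y z hz, zero_mul,
    sub_zero]
  exact mul_self_pos.2 (h.factor_pos z hz).ne'

lemma eq_zero_of_inner_frame_eq_zero (h : IsConformal U l Ω) (hz : z ∈ Ω) {v : E3}
    (hX : ⟪∂₁ U z, v⟫_ℝ = 0) (hY : ⟪∂₂ U z, v⟫_ℝ = 0) (hN : ⟪v, normal U z⟫_ℝ = 0) : v = 0 := by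
  have hsq := h.inner_normal_mul_inner_normal hz v v
  rw [hX, hY, hN, mul_zero, add_zero, mul_zero, sub_zero] at hsq
  exact inner_self_eq_zero.1
    ((mul_eq_zero.1 hsq.symm).resolve_left (pow_ne_zero 2 (h.factor_pos z hz).ne'))

lemma det_secondFundamentalForm (h : IsConformal U l Ω) (hz : z ∈ Ω) :
    ⟪∂₁ (∂₁ U) z, normal U z⟫_ℝ * ⟪∂₂ (∂₂ U) z, normal U z⟫_ℝ -
        ⟪∂₂ (∂₁ U) z, normal U z⟫_ℝ ^ 2 =
      -l z ^ 2 * (∂₁ (∂₁ l) z + ∂₂ (∂₂ l) z) / 2 + l z * (∂₁ l z ^ 2 + ∂₂ l z ^ 2) / 2 := by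
  obtain ⟨⟨h1, h2⟩, ⟨h3, h4⟩, h5, h6⟩ := h.inner_second_eq hz
  rw [sq ⟪_, _⟫_ℝ, h.inner_normal_mul_inner_normal hz, h.inner_normal_mul_inner_normal hz, h1, h2,
    h3, h4, h5, h6]
  linear_combination l z ^ 2 * h.gauss hz

lemma inner_second_eq_tangential_add_normal (h : IsConformal U l Ω) (hz : z ∈ Ω) (ν : E3) :
    l z ^ 2 * ⟪∂₁ (∂₁ U) z, ν⟫_ℝ = l z * ((∂₁ l z * ⟪∂₁ U z, ν⟫_ℝ - ∂₂ l z * ⟪∂₂ U z, ν⟫_ℝ) / 2) +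
      ⟪∂₁ (∂₁ U) z, normal U z⟫_ℝ * ⟪ν, normal U z⟫_ℝ ∧
    l z ^ 2 * ⟪∂₂ (∂₁ U) z, ν⟫_ℝ = l z * ((∂₂ l z * ⟪∂₁ U z, ν⟫_ℝ + ∂₁ l z * ⟪∂₂ U z, ν⟫_ℝ) / 2) +
      ⟪∂₂ (∂₁ U) z, normal U z⟫_ℝ * ⟪ν, normal U z⟫_ℝ ∧
    l z ^ 2 * ⟪∂₂ (∂₂ U) z, ν⟫_ℝ = l z * ((-∂₁ l z * ⟪∂₁ U z, ν⟫_ℝ + ∂₂ l z * ⟪∂₂ U z, ν⟫_ℝ) / 2) +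
      ⟪∂₂ (∂₂ U) z, normal U z⟫_ℝ * ⟪ν, normal U z⟫_ℝ := by
  obtain ⟨⟨h1, h2⟩, ⟨h3, h4⟩, h5, h6⟩ := h.inner_second_eq hz
  simp only [h.inner_normal_mul_inner_normal hz, h1, h2, h3, h4, h5, h6]
  refine ⟨?_, ?_, ?_⟩ <;> ring

lemma darboux (h : IsConformal U l Ω) (hz : z ∈ Ω) (ν : E3) {p q : ℝ}
    (hp : p = (∂₁ l z * ⟪∂₁ U z, ν⟫_ℝ - ∂₂ l z * ⟪∂₂ U z, ν⟫_ℝ) / (2 * l z))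
    (hq : q = (∂₂ l z * ⟪∂₁ U z, ν⟫_ℝ + ∂₁ l z * ⟪∂₂ U z, ν⟫_ℝ) / (2 * l z)) :
    (⟪∂₁ (∂₁ U) z, ν⟫_ℝ - p) * (⟪∂₂ (∂₂ U) z, ν⟫_ℝ + p) - (⟪∂₂ (∂₁ U) z, ν⟫_ℝ - q) ^ 2 =
      ⟪ν, normal U z⟫_ℝ ^ 2 * (-(∂₁ (∂₁ l) z + ∂₂ (∂₂ l) z) / (2 * l z ^ 2) +
        (∂₁ l z ^ 2 + ∂₂ l z ^ 2) / (2 * l z ^ 3)) := by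
  have hl := (h.factor_pos z hz).ne'
  obtain ⟨hxx, hxy, hyy⟩ := h.inner_second_eq_tangential_add_normal hz ν
  have hdet := h.det_secondFundamentalForm hz
  have hxx' : l z ^ 2 * (⟪∂₁ (∂₁ U) z, ν⟫_ℝ - p) =
      ⟪∂₁ (∂₁ U) z, normal U z⟫_ℝ * ⟪ν, normal U z⟫_ℝ := by
    rw [mul_sub, hxx, hp]
    field_simp
    ring
  have hyy' : l z ^ 2 * (⟪∂₂ (∂₂ U) z, ν⟫_ℝ + p) =
      ⟪∂₂ (∂₂ U) z, normal U z⟫_ℝ * ⟪ν, normal U z⟫_ℝ := by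
    rw [mul_add, hyy, hp]
    field_simp
    ring
  have hxy' : l z ^ 2 * (⟪∂₂ (∂₁ U) z, ν⟫_ℝ - q) =
      ⟪∂₂ (∂₁ U) z, normal U z⟫_ℝ * ⟪ν, normal U z⟫_ℝ := by
    rw [mul_sub, hxy, hq]
    field_simp
    ring
  refine mul_left_cancel₀ (pow_ne_zero 4 hl) ?_
  calc l z ^ 4 * ((⟪∂₁ (∂₁ U) z, ν⟫_ℝ - p) * (⟪∂₂ (∂₂ U) z, ν⟫_ℝ + p) -
        (⟪∂₂ (∂₁ U) z, ν⟫_ℝ - q) ^ 2)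
      = l z ^ 2 * (⟪∂₁ (∂₁ U) z, ν⟫_ℝ - p) * (l z ^ 2 * (⟪∂₂ (∂₂ U) z, ν⟫_ℝ + p)) -
        (l z ^ 2 * (⟪∂₂ (∂₁ U) z, ν⟫_ℝ - q)) ^ 2 := by ring
    _ = ⟪ν, normal U z⟫_ℝ ^ 2 * (⟪∂₁ (∂₁ U) z, normal U z⟫_ℝ * ⟪∂₂ (∂₂ U) z, normal U z⟫_ℝ -
        ⟪∂₂ (∂₁ U) z, normal U z⟫_ℝ ^ 2) := by
      rw [hxx', hyy', hxy']
      ring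
    _ = _ := by
      rw [hdet]
      field_simp

lemma exists_nhds_inner_normal_pos (h : IsConformal U l Ω) (hz : z ∈ Ω) :
    ∃ W ⊆ Ω, IsOpen W ∧ z ∈ W ∧ ∀ w ∈ W, ∀ w' ∈ W, 0 < ⟪normal U w, normal U w'⟫_ℝ := by
  have hN := continuousAt_normal ((h.contDiffAt hz).of_le one_le_two)
  have hcont : ContinuousAt (fun p : (ℝ × ℝ) × (ℝ × ℝ) => ⟪normal U p.1, normal U p.2⟫_ℝ) (z, z) :=
    (ContinuousAt.fst' hN).inner (ContinuousAt.snd' hN)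
  have hpos := hcont.eventually_const_lt (h.inner_normal_self_pos hz)
  rw [nhds_prod_eq] at hpos
  obtain ⟨s, hs, hsp⟩ := eventually_prod_self_iff'.1 hpos
  obtain ⟨W, hWs, hW, hzW⟩ := _root_.mem_nhds_iff.1 hs
  exact ⟨W ∩ Ω, inter_subset_right, hW.inter h.isOpen, ⟨hzW, hz⟩,
    fun w hw w' hw' => hsp w (hWs hw.1) w' (hWs hw'.1)⟩

end IsConformal

end Normal

section TestDisc

variable {U : ℝ × ℝ → E3} {l : ℝ × ℝ → ℝ} {Ω W : Set (ℝ × ℝ)} {c z : ℝ × ℝ} {ρ : ℝ}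

/-- On the set `W`, which contains the disc `{0 ≤ discQ c ρ}`, the conformal factor `l` is critical
outside the disc, and its derivatives vanish towards the boundary circle in such a way that the
curvature of `l (dx² + dy²)` is positive to first order along that circle. -/
structure IsTestDisc (l : ℝ × ℝ → ℝ) (c : ℝ × ℝ) (ρ : ℝ) (W : Set (ℝ × ℝ)) : Prop where
  pos : 0 < ρ
  mem_of_nonneg : ∀ z, 0 ≤ discQ c ρ z → z ∈ W
  exists_coeff : ∃ A B C : ℝ × ℝ → ℝ, (Continuous A ∧ Continuous B ∧ Continuous C) ∧
    (∀ z, discQ c ρ z = 0 → 0 < C z) ∧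
    ∀ z ∈ W, ∂₁ l z = max (discQ c ρ z) 0 ^ 2 * A z ∧ ∂₂ l z = max (discQ c ρ z) 0 ^ 2 * B z ∧
      ∂₁ (∂₁ l) z + ∂₂ (∂₂ l) z = -(max (discQ c ρ z) 0 * C z)

/-- Every neighbourhood of `z` contains a test disc of `l`, together with a neighbourhood of it. -/
def AccumulatesTestDiscs (l : ℝ × ℝ → ℝ) (z : ℝ × ℝ) : Prop :=
  ∀ N ∈ 𝓝 z, ∃ (c : ℝ × ℝ) (ρ : ℝ) (W : Set (ℝ × ℝ)), W ⊆ N ∧ IsOpen W ∧ IsTestDisc l c ρ W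

lemma IsTestDisc.partials_eq_zero (h : IsTestDisc l c ρ W) (hz : discQ c ρ z = 0) :
    ∂₁ l z = 0 ∧ ∂₂ l z = 0 ∧ ∂₁ (∂₁ l) z + ∂₂ (∂₂ l) z = 0 := by
  obtain ⟨A, B, C, -, -, hl⟩ := h.exists_coeff
  simpa [hz] using hl z (h.mem_of_nonneg z hz.ge)

lemma partials_inner_const (hU : ContDiffAt ℝ 2 U z) (ν : E3) :
    ∂₁ (∂₁ fun w => ⟪U w, ν⟫_ℝ) z = ⟪∂₁ (∂₁ U) z, ν⟫_ℝ ∧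
    ∂₂ (∂₁ fun w => ⟪U w, ν⟫_ℝ) z = ⟪∂₂ (∂₁ U) z, ν⟫_ℝ ∧
    ∂₂ (∂₂ fun w => ⟪U w, ν⟫_ℝ) z = ⟪∂₂ (∂₂ U) z, ν⟫_ℝ := by
  have hfirst : ∀ᶠ w in 𝓝 z,
      HasPartialsAt (fun w => ⟪U w, ν⟫_ℝ) ⟪∂₁ U w, ν⟫_ℝ ⟪∂₂ U w, ν⟫_ℝ w := by
    filter_upwards [hU.eventually (by simp)] with w hw
    simpa using (hasPartialsAt_of_contDiffAt hw two_ne_zero).inner (HasPartialsAt.const ν w)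
  have hX := (hasPartialsAt_partialX hU).inner (HasPartialsAt.const ν z)
  have hY := (hasPartialsAt_partialY hU).inner (HasPartialsAt.const ν z)
  rw [partialX_congr (hfirst.mono fun _ h => h.fst_eq),
    partialY_congr (hfirst.mono fun _ h => h.fst_eq),
    partialY_congr (hfirst.mono fun _ h => h.snd_eq), hX.fst_eq, hX.snd_eq, hY.snd_eq]
  simp

namespace IsConformal

lemma exists_det_hessian_eq_max_discQ_mul (h : IsConformal U l W) (hd : IsTestDisc l c ρ W)
    {ν : E3} (hν : ∀ z ∈ W, ⟪ν, normal U z⟫_ℝ ≠ 0) :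
    ∃ G : ℝ × ℝ → ℝ, ContinuousOn G W ∧ (∀ z, discQ c ρ z = 0 → 0 < G z) ∧
      ∀ z ∈ W, ⟪∂₁ (∂₁ U) z, ν⟫_ℝ * ⟪∂₂ (∂₂ U) z, ν⟫_ℝ - ⟪∂₂ (∂₁ U) z, ν⟫_ℝ ^ 2 =
        max (discQ c ρ z) 0 * G z := by
  obtain ⟨A, B, C, ⟨hA, hB, hC⟩, hCpos, hl⟩ := hd.exists_coeff
  let M : ℝ × ℝ → ℝ := fun z => max (discQ c ρ z) 0
  let p : ℝ × ℝ → ℝ := fun z => (A z * ⟪∂₁ U z, ν⟫_ℝ - B z * ⟪∂₂ U z, ν⟫_ℝ) / (2 * l z)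
  let q : ℝ × ℝ → ℝ := fun z => (B z * ⟪∂₁ U z, ν⟫_ℝ + A z * ⟪∂₂ U z, ν⟫_ℝ) / (2 * l z)
  refine ⟨fun z => ⟪ν, normal U z⟫_ℝ ^ 2 *
      (C z / (2 * l z ^ 2) + M z ^ 3 * (A z ^ 2 + B z ^ 2) / (2 * l z ^ 3)) -
    M z * (p z * (⟪∂₁ (∂₁ U) z, ν⟫_ℝ - ⟪∂₂ (∂₂ U) z, ν⟫_ℝ) + 2 * q z * ⟪∂₂ (∂₁ U) z, ν⟫_ℝ) +
    M z ^ 3 * (p z ^ 2 + q z ^ 2), ?_, fun z hz => ?_, fun z hz => ?_⟩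
  · intro z hz
    have hU := h.contDiffAt hz
    have hUX : ContDiffAt ℝ 1 (∂₁ U) z := contDiffAt_partialX hU (by norm_num)
    have hUY : ContDiffAt ℝ 1 (∂₂ U) z := contDiffAt_partialY hU (by norm_num)
    have hUXX := (contDiffAt_partialX (m := 0) hUX (by norm_num)).continuousAt
    have hUXY := (contDiffAt_partialY (m := 0) hUX (by norm_num)).continuousAt
    have hUYY := (contDiffAt_partialY (m := 0) hUY (by norm_num)).continuousAt
    have hN := continuousAt_normal (hU.of_le one_le_two)
    have hlc := (h.contDiffAt_factor hz).continuousAt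
    have hl0 := (h.factor_pos z hz).ne'
    have hM : Continuous M := (continuous_discQ c ρ).max continuous_const
    have hX := hUX.continuousAt
    have hY := hUY.continuousAt
    refine ContinuousAt.continuousWithinAt ?_
    have hp : ContinuousAt p z := by
      fun_prop (disch := positivity)
    have hq : ContinuousAt q z := by
      fun_prop (disch := positivity)
    fun_prop (disch := positivity)
  · have hzW := hd.mem_of_nonneg z hz.ge
    have := h.factor_pos z hzW
    have hν2 := even_two.pow_pos (hν z hzW)
    have hCz := hCpos z hz
    simp only [M, hz, max_self]
    ring_nf
    positivity
  · obtain ⟨hx, hy, hΔ⟩ := hl z hz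
    have hdarboux := h.darboux hz ν (p := M z ^ 2 * p z) (q := M z ^ 2 * q z)
      (by rw [hx, hy]; ring) (by rw [hx, hy]; ring)
    rw [hΔ, hx, hy] at hdarboux
    linear_combination hdarboux

lemma inner_partialXX_normal_eq_zero (h : IsConformal U l Ω) (hz : z ∈ Ω)
    (hl : AccumulatesTestDiscs l z) : ⟪∂₁ (∂₁ U) z, normal U z⟫_ℝ = 0 := by
  by_contra hne
  set ν := ⟪∂₁ (∂₁ U) z, normal U z⟫_ℝ • normal U z with hν
  have hXX : 0 < ⟪∂₁ (∂₁ U) z, ν⟫_ℝ := by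
    rw [hν, inner_smul_right]
    exact mul_self_pos.2 hne
  have hνN : ⟪ν, normal U z⟫_ℝ ≠ 0 := by
    rw [hν, real_inner_smul_left]
    exact mul_ne_zero hne (h.inner_normal_self_pos hz).ne'
  have hU := h.contDiffAt hz
  have hUXX := (contDiffAt_partialX (m := 0)
    (contDiffAt_partialX (m := 1) hU (by norm_num)) (by norm_num)).continuousAt
  have hN : ∀ᶠ w in 𝓝 z, w ∈ Ω ∧ 0 < ⟪∂₁ (∂₁ U) w, ν⟫_ℝ ∧ ⟪ν, normal U w⟫_ℝ ≠ 0 :=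
    (h.isOpen.eventually_mem hz).and (((hUXX.inner continuousAt_const).eventually_const_lt hXX).and
      ((continuousAt_const.inner
        (continuousAt_normal (hU.of_le one_le_two))).eventually_ne hνN))
  obtain ⟨c, ρ, W, hWN, hW, hd⟩ := hl _ hN
  have hWU := h.mono hW fun w hw => (hWN hw).1
  obtain ⟨G, hG, hGpos, hdet⟩ :=
    hWU.exists_det_hessian_eq_max_discQ_mul hd fun w hw => (hWN hw).2.2
  refine det_hessian_ne_max_discQ_mul (φ := fun w => ⟪U w, ν⟫_ℝ) hW
    (hWU.contDiffOn.inner ℝ contDiffOn_const) hd.pos hd.mem_of_nonneg (fun w hw => ?_) hG hGpos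
    fun w hw => ?_
  · rw [(partials_inner_const (hWU.contDiffAt (hd.mem_of_nonneg w hw)) ν).1]
    exact (hWN (hd.mem_of_nonneg w hw)).2.1
  · obtain ⟨hφXX, hφXY, hφYY⟩ := partials_inner_const (hWU.contDiffAt hw) ν
    rw [hφXX, hφXY, hφYY, hdet w hw]

lemma second_partials_eq_zero (h : IsConformal U l Ω) (hz : z ∈ Ω)
    (hl : AccumulatesTestDiscs l z) (hx : ∂₁ l z = 0) (hy : ∂₂ l z = 0)
    (hΔ : ∂₁ (∂₁ l) z + ∂₂ (∂₂ l) z = 0) :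
    ∂₁ (∂₁ U) z = 0 ∧ ∂₂ (∂₁ U) z = 0 := by
  have hXX := h.inner_partialXX_normal_eq_zero hz hl
  have hdet := h.det_secondFundamentalForm hz
  have hXY : ⟪∂₂ (∂₁ U) z, normal U z⟫_ℝ = 0 := by
    rw [hXX, hx, hy, hΔ] at hdet
    exact pow_eq_zero_iff two_ne_zero |>.1 (by linarith)
  obtain ⟨⟨hXX₁, hXX₂⟩, ⟨hXY₁, hXY₂⟩, -⟩ := h.inner_second_eq hz
  simp only [hx, hy, neg_zero, zero_div] at hXX₁ hXX₂ hXY₁ hXY₂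
  exact ⟨h.eq_zero_of_inner_frame_eq_zero hz hXX₁ hXX₂ hXX,
    h.eq_zero_of_inner_frame_eq_zero hz hXY₁ hXY₂ hXY⟩

end IsConformal

end TestDisc

section Target

lemma eq_antipodal_of_hasPartialsAt_zero {V : Type*} [NormedAddCommGroup V] [NormedSpace ℝ V]
    {f : ℝ × ℝ → V} {c : ℝ × ℝ} {ρ : ℝ} (hf : ∀ z, discQ c ρ z = 0 → HasPartialsAt f 0 0 z) :
    f (c.1 + ρ, c.2) = f (c.1 - ρ, c.2) := by
  let γ : ℝ → ℝ × ℝ := fun θ => (c.1 + ρ * Real.cos θ, c.2 + ρ * Real.sin θ)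
  have hγ : ∀ θ, discQ c ρ (γ θ) = 0 := fun θ => by
    simp only [discQ, γ]
    linear_combination -ρ ^ 2 * Real.sin_sq_add_cos_sq θ
  have hderiv : ∀ θ, HasDerivAt (f ∘ γ) 0 θ := fun θ => by
    have hcircle := (((Real.hasDerivAt_cos θ).const_mul ρ).const_add c.1).prodMk
      (((Real.hasDerivAt_sin θ).const_mul ρ).const_add c.2)
    have hstep := (hf _ (hγ θ)).hasDerivAt_comp hcircle rfl
    simp only [smul_zero, add_zero] at hstep
    exact hstep
  have hconst := is_const_of_deriv_eq_zero (fun θ => (hderiv θ).differentiableAt)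
    (fun θ => (hderiv θ).deriv) 0 Real.pi
  simpa [γ, ← sub_eq_add_neg] using hconst

/-- Rolle's theorem for `f / √l`. -/
lemma exists_two_mul_mul_deriv_eq {f f' l l' : ℝ → ℝ} {a b : ℝ} (hab : a < b)
    (hf : ∀ t ∈ Icc a b, HasDerivAt f (f' t) t) (hl : ∀ t ∈ Icc a b, HasDerivAt l (l' t) t)
    (hpos : ∀ t ∈ Icc a b, 0 < l t) (ha : f a = 0) (hb : f b = 0) :
    ∃ t ∈ Ioo a b, 2 * l t * f' t = l' t * f t := by
  have hquot : ∀ t ∈ Icc a b, HasDerivAt (fun t => f t / √(l t)) _ t := fun t ht =>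
    (hf t ht).fun_div ((hl t ht).sqrt (hpos t ht).ne') (Real.sqrt_pos.2 (hpos t ht)).ne'
  obtain ⟨t, ht, hzero⟩ := exists_hasDerivAt_eq_zero hab
    (fun t ht => (hquot t ht).continuousAt.continuousWithinAt) (by simp [ha, hb])
    fun t ht => hquot t (Ioo_subset_Icc_self ht)
  have hlt := hpos t (Ioo_subset_Icc_self ht)
  have hsqrt := Real.sqrt_pos.2 hlt
  refine ⟨t, ht, ?_⟩
  rw [div_eq_zero_iff, or_iff_left (by positivity)] at hzero
  field_simp at hzero
  rw [Real.sq_sqrt hlt.le] at hzero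
  linarith

/-- If the second derivatives of `U` vanish on the circle, then `∂₁ U` takes the same value at both
ends of the horizontal diameter, and Rolle's theorem produces a point of the diameter where the
curvature is nonpositive. -/
lemma IsConformal.exists_not_accumulatesTestDiscs {U : ℝ × ℝ → E3} {l : ℝ × ℝ → ℝ}
    {Ω W : Set (ℝ × ℝ)} {c : ℝ × ℝ} {ρ : ℝ} (h : IsConformal U l Ω) (hd : IsTestDisc l c ρ W)
    (hWΩ : W ⊆ Ω)
    (hy : ∀ t ∈ Ioo (c.1 - ρ) (c.1 + ρ), ∂₂ l (t, c.2) = 0)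
    (hΔ : ∀ t ∈ Ioo (c.1 - ρ) (c.1 + ρ), ∂₁ (∂₁ l) (t, c.2) + ∂₂ (∂₂ l) (t, c.2) < 0)
    (hN : ∀ z ∈ Ω, ∀ w ∈ Ω, 0 < ⟪normal U z, normal U w⟫_ℝ) :
    ∃ z, discQ c ρ z = 0 ∧ ¬ AccumulatesTestDiscs l z := by
  by_contra! hall
  have hρ := hd.pos
  have hends : ∂₁ U (c.1 + ρ, c.2) = ∂₁ U (c.1 - ρ, c.2) :=
    eq_antipodal_of_hasPartialsAt_zero fun z hz => by
      have hzΩ := hWΩ (hd.mem_of_nonneg z hz.ge)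
      obtain ⟨hlx, hly, hlΔ⟩ := hd.partials_eq_zero hz
      obtain ⟨hXX, hXY⟩ := h.second_partials_eq_zero hzΩ (hall z hz) hlx hly hlΔ
      simpa only [hXX, hXY] using hasPartialsAt_partialX (h.contDiffAt hzΩ)
  have hdiam : ∀ t ∈ Icc (c.1 - ρ) (c.1 + ρ), (t, c.2) ∈ Ω := fun t ht =>
    hWΩ (hd.mem_of_nonneg _ (by simp only [discQ]; nlinarith [ht.1, ht.2]))
  have hleft := hdiam _ (left_mem_Icc.2 (by linarith))
  set ν := normal U (c.1 - ρ, c.2)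
  have hleft₀ : ⟪∂₁ U (c.1 - ρ, c.2), ν⟫_ℝ = 0 := inner_left_cross _ _
  obtain ⟨t, ht, hrolle⟩ := exists_two_mul_mul_deriv_eq (f := fun t => ⟪∂₁ U (t, c.2), ν⟫_ℝ)
    (l := fun t => l (t, c.2)) (by linarith)
    (fun t ht => ((hasPartialsAt_partialX (h.contDiffAt (hdiam t ht))).inner
      (HasPartialsAt.const ν _)).hasDerivAt_fst)
    (fun t ht => (hasPartialsAt_of_contDiffAt (h.contDiffAt_factor (hdiam t ht))
      two_ne_zero).hasDerivAt_fst)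
    (fun t ht => h.factor_pos _ (hdiam t ht)) hleft₀ (by rw [hends, hleft₀])
  have htΩ := hdiam t (Ioo_subset_Icc_self ht)
  have hl := h.factor_pos _ htΩ
  have hXX := (h.inner_second_eq_tangential_add_normal htΩ ν).1
  rw [hy t ht, zero_mul, sub_zero] at hXX
  rw [inner_zero_right, zero_add] at hrolle
  have hXXN : ⟪∂₁ (∂₁ U) (t, c.2), normal U (t, c.2)⟫_ℝ = 0 := by
    refine (mul_eq_zero.1 ?_).resolve_right (hN _ hleft _ htΩ).ne'
    linear_combination l (t, c.2) / 2 * hrolle - hXX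
  have hdet := h.det_secondFundamentalForm htΩ
  rw [hXXN, hy t ht] at hdet
  nlinarith [mul_pos (pow_pos hl 2) (neg_pos.2 (hΔ t ht)),
    mul_nonneg hl.le (sq_nonneg (∂₁ l (t, c.2))),
    sq_nonneg ⟪∂₂ (∂₁ U) (t, c.2), normal U (t, c.2)⟫_ℝ]

end Target

lemma hasDerivAt_max_zero_pow (n : ℕ) (t : ℝ) :
    HasDerivAt (fun t : ℝ => max t 0 ^ (n + 2)) ((n + 2) * max t 0 ^ (n + 1)) t := by
  rcases lt_trichotomy t 0 with ht | rfl | ht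
  · have hzero : (fun t : ℝ => max t 0 ^ (n + 2)) =ᶠ[𝓝 t] fun _ => 0 := by
      filter_upwards [gt_mem_nhds ht] with s hs
      simp [max_eq_right hs.le]
    simpa [max_eq_right ht.le] using (hasDerivAt_const t (0 : ℝ)).congr_of_eventuallyEq hzero
  · have hbound : (fun t : ℝ => max t 0 ^ (n + 2)) =O[𝓝 0] fun t => t ^ (n + 2) := by
      refine Asymptotics.isBigO_of_le _ fun s => ?_
      rw [norm_pow, norm_pow, Real.norm_eq_abs, Real.norm_eq_abs, abs_of_nonneg (le_max_right _ _)]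
      exact pow_le_pow_left₀ (le_max_right _ _) (max_le (le_abs_self s) (abs_nonneg s)) _
    have hpow : (fun t : ℝ => t ^ (n + 2)) =o[𝓝 0] fun t => t := by
      simpa using Asymptotics.isLittleO_pow_pow (𝕜 := ℝ) (show 1 < n + 2 by omega)
    exact HasDerivAt.of_isLittleO (by simpa using hbound.trans_isLittleO hpow)
  · have hpow : (fun t : ℝ => max t 0 ^ (n + 2)) =ᶠ[𝓝 t] fun t => t ^ (n + 2) := by
      filter_upwards [lt_mem_nhds ht] with s hs
      rw [max_eq_left hs.le]
    simpa [max_eq_left ht.le] using (hasDerivAt_pow (n + 2) t).congr_of_eventuallyEq hpow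

section Bump

variable (c : ℝ × ℝ) (ρ : ℝ) (z : ℝ × ℝ)

lemma hasPartialsAt_max_discQ_pow (n : ℕ) :
    HasPartialsAt (fun w => max (discQ c ρ w) 0 ^ (n + 2))
      ((n + 2) * max (discQ c ρ z) 0 ^ (n + 1) * (-2 * (z.1 - c.1)))
      ((n + 2) * max (discQ c ρ z) 0 ^ (n + 1) * (-2 * (z.2 - c.2))) z := by
  have hx := (HasPartialsAt.fst z).sub (HasPartialsAt.const c.1 z)
  have hy := (HasPartialsAt.snd z).sub (HasPartialsAt.const c.2 z)
  have hQ : HasPartialsAt (discQ c ρ) (-2 * (z.1 - c.1)) (-2 * (z.2 - c.2)) z := by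
    convert ((HasPartialsAt.const (ρ ^ 2) z).sub (hx.mul hx)).sub (hy.mul hy) using 1
    · ext w; simp only [discQ]; ring
    all_goals ring
  refine hasPartialsAt_of_hasFDerivAt ((hasDerivAt_max_zero_pow n (discQ c ρ z)).comp_hasFDerivAt z
    hQ.differentiableAt.hasFDerivAt) ?_ ?_ <;>
  simp [fderiv_apply_eq_partials, hQ.fst_eq, hQ.snd_eq]

/-- A `C^{2,1}` function supported in the disc `{0 ≤ discQ c ρ}`. Its Laplacian
`-(max (discQ c ρ) 0 * bumpC c ρ)` is negative just inside the boundary circle; the factor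
`ρ ^ 2 + 10 * (z.2 - c.2) ^ 2` makes it negative on the whole horizontal diameter as well. -/
def bump : ℝ := -(max (discQ c ρ z) 0 ^ 3 * (ρ ^ 2 + 10 * (z.2 - c.2) ^ 2))

/-- The cofactor of `max (discQ c ρ) 0 ^ 2` in `∂₁ (bump c ρ)`. -/
def bumpA : ℝ := 6 * (z.1 - c.1) * (ρ ^ 2 + 10 * (z.2 - c.2) ^ 2)

/-- The cofactor of `max (discQ c ρ) 0 ^ 2` in `∂₂ (bump c ρ)`. -/
def bumpB : ℝ := 6 * (z.2 - c.2) * (ρ ^ 2 + 10 * (z.2 - c.2) ^ 2) -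
  20 * max (discQ c ρ z) 0 * (z.2 - c.2)

/-- The cofactor of `-max (discQ c ρ) 0` in the Laplacian of `bump c ρ`. -/
def bumpC : ℝ := 24 * ((z.1 - c.1) ^ 2 + (z.2 - c.2) ^ 2) * (ρ ^ 2 + 10 * (z.2 - c.2) ^ 2) -
  12 * max (discQ c ρ z) 0 * (ρ ^ 2 + 10 * (z.2 - c.2) ^ 2) -
  240 * max (discQ c ρ z) 0 * (z.2 - c.2) ^ 2 + 20 * max (discQ c ρ z) 0 ^ 2

/-- The second derivative `∂₁ (∂₁ (bump c ρ))`. -/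
def bumpXX : ℝ := max (discQ c ρ z) 0 * (ρ ^ 2 + 10 * (z.2 - c.2) ^ 2) *
  (6 * max (discQ c ρ z) 0 - 24 * (z.1 - c.1) ^ 2)

/-- The second derivative `∂₂ (∂₁ (bump c ρ))`. -/
def bumpXY : ℝ := max (discQ c ρ z) 0 * (z.1 - c.1) * (z.2 - c.2) *
  (120 * max (discQ c ρ z) 0 - 24 * (ρ ^ 2 + 10 * (z.2 - c.2) ^ 2))

/-- The second derivative `∂₂ (∂₂ (bump c ρ))`. -/
def bumpYY : ℝ := max (discQ c ρ z) 0 * (6 * max (discQ c ρ z) 0 *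
  (ρ ^ 2 + 10 * (z.2 - c.2) ^ 2) - 24 * (z.2 - c.2) ^ 2 * (ρ ^ 2 + 10 * (z.2 - c.2) ^ 2) +
  240 * max (discQ c ρ z) 0 * (z.2 - c.2) ^ 2 - 20 * max (discQ c ρ z) 0 ^ 2)

lemma hasPartialsAt_bump : HasPartialsAt (bump c ρ) (max (discQ c ρ z) 0 ^ 2 * bumpA c ρ z)
    (max (discQ c ρ z) 0 ^ 2 * bumpB c ρ z) z := by
  have hy := (HasPartialsAt.snd z).sub (HasPartialsAt.const c.2 z)
  have hS := (HasPartialsAt.const (ρ ^ 2) z).add ((hy.mul hy).const_mul 10)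
  convert ((hasPartialsAt_max_discQ_pow c ρ z 1).mul hS).neg using 1
  · ext w; simp only [bump]; ring
  · simp only [bumpA]; push_cast; ring
  · simp only [bumpB]; push_cast; ring

lemma partialX_bump : ∂₁ (bump c ρ) = fun z => max (discQ c ρ z) 0 ^ 2 * bumpA c ρ z :=
  funext fun z => (hasPartialsAt_bump c ρ z).fst_eq

lemma partialY_bump : ∂₂ (bump c ρ) = fun z => max (discQ c ρ z) 0 ^ 2 * bumpB c ρ z :=
  funext fun z => (hasPartialsAt_bump c ρ z).snd_eq

lemma hasPartialsAt_partialX_bump :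
    HasPartialsAt (∂₁ (bump c ρ)) (bumpXX c ρ z) (bumpXY c ρ z) z := by
  have hx := (HasPartialsAt.fst z).sub (HasPartialsAt.const c.1 z)
  have hy := (HasPartialsAt.snd z).sub (HasPartialsAt.const c.2 z)
  have hS := (HasPartialsAt.const (ρ ^ 2) z).add ((hy.mul hy).const_mul 10)
  rw [partialX_bump]
  convert ((hasPartialsAt_max_discQ_pow c ρ z 0).mul (hx.mul hS)).const_mul 6 using 1
  · ext w; simp only [bumpA]; ring
  · simp only [bumpXX]; push_cast; ring
  · simp only [bumpXY]; push_cast; ring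

lemma hasPartialsAt_partialY_bump :
    HasPartialsAt (∂₂ (bump c ρ)) (bumpXY c ρ z) (bumpYY c ρ z) z := by
  have hy := (HasPartialsAt.snd z).sub (HasPartialsAt.const c.2 z)
  have hS := (HasPartialsAt.const (ρ ^ 2) z).add ((hy.mul hy).const_mul 10)
  rw [partialY_bump]
  convert (((hasPartialsAt_max_discQ_pow c ρ z 0).mul (hy.mul hS)).const_mul 6).sub
    (((hasPartialsAt_max_discQ_pow c ρ z 1).mul hy).const_mul 20) using 1
  · ext w; simp only [bumpB]; ring
  · simp only [bumpXY]; push_cast; ring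
  · simp only [bumpYY]; push_cast; ring

lemma bumpXX_add_bumpYY : bumpXX c ρ z + bumpYY c ρ z = -(max (discQ c ρ z) 0 * bumpC c ρ z) := by
  simp only [bumpXX, bumpYY, bumpC]
  ring

lemma contDiff_bump : ContDiff ℝ 2 (bump c ρ) := by
  have hQ := continuous_discQ c ρ
  have hXX : Continuous (bumpXX c ρ) := by unfold bumpXX; fun_prop
  have hXY : Continuous (bumpXY c ρ) := by unfold bumpXY; fun_prop
  have hYY : Continuous (bumpYY c ρ) := by unfold bumpYY; fun_prop
  have hX (z) : ContDiffAt ℝ 1 (∂₁ (bump c ρ)) z :=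
    contDiffAt_succ_of_partials (n := 0) (.of_forall (hasPartialsAt_partialX_bump c ρ))
      (contDiff_zero.2 hXX).contDiffAt (contDiff_zero.2 hXY).contDiffAt
  have hY (z) : ContDiffAt ℝ 1 (∂₂ (bump c ρ)) z :=
    contDiffAt_succ_of_partials (n := 0) (.of_forall (hasPartialsAt_partialY_bump c ρ))
      (contDiff_zero.2 hXY).contDiffAt (contDiff_zero.2 hYY).contDiffAt
  refine contDiff_iff_contDiffAt.2 fun z => contDiffAt_succ_of_partials (n := 1)
    (.of_forall fun w => ?_) (hX z) (hY z)
  exact hasPartialsAt_of_differentiableAt (hasPartialsAt_bump c ρ w).differentiableAt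

lemma locallyLipschitz_fderiv_fderiv_bump :
    LocallyLipschitz (fderiv ℝ (fderiv ℝ (bump c ρ))) := by
  have hQ : LocallyLipschitz fun z => (max (discQ c ρ z) 0, z) :=
    (((by unfold discQ; fun_prop : ContDiff ℝ 1 (discQ c ρ)).locallyLipschitz).max_const
      0).prodMk LocallyLipschitz.id
  let XX : ℝ × ℝ × ℝ → ℝ := fun w =>
    w.1 * (ρ ^ 2 + 10 * (w.2.2 - c.2) ^ 2) * (6 * w.1 - 24 * (w.2.1 - c.1) ^ 2)
  let XY : ℝ × ℝ × ℝ → ℝ := fun w => w.1 * (w.2.1 - c.1) * (w.2.2 - c.2) *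
    (120 * w.1 - 24 * (ρ ^ 2 + 10 * (w.2.2 - c.2) ^ 2))
  let YY : ℝ × ℝ × ℝ → ℝ := fun w => w.1 * (6 * w.1 * (ρ ^ 2 + 10 * (w.2.2 - c.2) ^ 2) -
    24 * (w.2.2 - c.2) ^ 2 * (ρ ^ 2 + 10 * (w.2.2 - c.2) ^ 2) +
    240 * w.1 * (w.2.2 - c.2) ^ 2 - 20 * w.1 ^ 2)
  have hΦ : ContDiff ℝ 1 fun w => ofPartials
      (ofPartials (XX w, XY w), ofPartials (XY w, YY w)) := by
    fun_prop
  convert hΦ.locallyLipschitz.comp hQ using 1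
  ext1 z
  rw [fderiv_fderiv_eq_ofPartials (contDiff_bump c ρ).contDiffAt,
    (hasPartialsAt_partialX_bump c ρ z).fst_eq, (hasPartialsAt_partialX_bump c ρ z).snd_eq,
    (hasPartialsAt_partialY_bump c ρ z).snd_eq]
  rfl

lemma continuous_bumpA : Continuous (bumpA c ρ) := by unfold bumpA; fun_prop

lemma continuous_bumpB : Continuous (bumpB c ρ) := by
  have := continuous_discQ c ρ
  unfold bumpB
  fun_prop

lemma continuous_bumpC : Continuous (bumpC c ρ) := by
  have := continuous_discQ c ρ
  unfold bumpC
  fun_prop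

variable {c ρ z}

lemma bumpC_pos_of_discQ_eq_zero (hρ : 0 < ρ) (h : discQ c ρ z = 0) : 0 < bumpC c ρ z := by
  have hdist : (z.1 - c.1) ^ 2 + (z.2 - c.2) ^ 2 = ρ ^ 2 := by
    simp only [discQ] at h
    linarith
  simp only [bumpC, h, max_self, hdist]
  have : 0 < ρ ^ 2 * (ρ ^ 2 + 10 * (z.2 - c.2) ^ 2) := by positivity
  linarith

lemma bumpC_pos_of_snd_eq (hρ : 0 < ρ) (h : 0 ≤ discQ c ρ z) (hz : z.2 = c.2) :
    0 < bumpC c ρ z := by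
  have hdist : (z.1 - c.1) ^ 2 = ρ ^ 2 - discQ c ρ z := by
    simp only [discQ, hz]
    ring
  simp only [bumpC, max_eq_left h, hz, hdist]
  nlinarith [sq_nonneg (9 * ρ ^ 2 - 10 * discQ c ρ z), pow_pos hρ 4]

lemma bump_eq_zero (h : discQ c ρ z ≤ 0) : bump c ρ z = 0 := by
  simp [bump, max_eq_right h]

lemma hasCompactSupport_bump (c : ℝ × ℝ) (ρ : ℝ) : HasCompactSupport (bump c ρ) :=
  HasCompactSupport.intro (isCompact_discQ_nonneg c ρ) fun _ hz => bump_eq_zero (not_le.1 hz).le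

end Bump

section BumpDisc

variable {f g l : ℝ × ℝ → ℝ} {c : ℝ × ℝ} {ρ : ℝ} {W : Set (ℝ × ℝ)}

lemma eqOn_fderiv_of_subset_closure_interior (hf : ContDiff ℝ 1 f) (hg : ContDiff ℝ 1 g)
    (hW : W ⊆ closure (interior W)) (h : EqOn f g W) : EqOn (fderiv ℝ f) (fderiv ℝ g) W := by
  have hint : EqOn (fderiv ℝ f) (fderiv ℝ g) (interior W) := fun z hz =>
    ((h.mono interior_subset).eventuallyEq_of_mem (isOpen_interior.mem_nhds hz)).fderiv_eq
  exact (hint.closure (hf.continuous_fderiv one_ne_zero) (hg.continuous_fderiv one_ne_zero)).mono hW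

lemma eqOn_partials_of_subset_closure_interior (hf : ContDiff ℝ 2 f) (hg : ContDiff ℝ 2 g)
    (hW : W ⊆ closure (interior W)) (h : EqOn f g W) :
    EqOn (∂₁ f) (∂₁ g) W ∧ EqOn (∂₂ f) (∂₂ g) W ∧
      EqOn (∂₁ (∂₁ f)) (∂₁ (∂₁ g)) W ∧ EqOn (∂₂ (∂₂ f)) (∂₂ (∂₂ g)) W := by
  have hX {f : ℝ × ℝ → ℝ} (hf : ContDiff ℝ 2 f) : ContDiff ℝ 1 (∂₁ f) :=
    contDiff_iff_contDiffAt.2 fun _ => contDiffAt_partialX hf.contDiffAt (by norm_num)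
  have hY {f : ℝ × ℝ → ℝ} (hf : ContDiff ℝ 2 f) : ContDiff ℝ 1 (∂₂ f) :=
    contDiff_iff_contDiffAt.2 fun _ => contDiffAt_partialY hf.contDiffAt (by norm_num)
  have hD := eqOn_fderiv_of_subset_closure_interior (hf.of_le one_le_two) (hg.of_le one_le_two) hW h
  have hDX : EqOn (∂₁ f) (∂₁ g) W := fun z hz => congrArg (· (1, 0)) (hD hz)
  have hDY : EqOn (∂₂ f) (∂₂ g) W := fun z hz => congrArg (· (0, 1)) (hD hz)
  refine ⟨hDX, hDY, fun z hz => ?_, fun z hz => ?_⟩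
  · exact congrArg (· (1, 0)) (eqOn_fderiv_of_subset_closure_interior (hX hf) (hX hg) hW hDX hz)
  · exact congrArg (· (0, 1)) (eqOn_fderiv_of_subset_closure_interior (hY hf) (hY hg) hW hDY hz)

/-- On `W`, which contains the disc `{0 ≤ discQ c ρ}`, the function `l` is `1` plus a positive
multiple of the bump supported in that disc. The set `W` may be the closed disc itself; the last
condition makes the formula for `l` determine its derivatives on `W`. -/
structure IsBumpOn (l : ℝ × ℝ → ℝ) (c : ℝ × ℝ) (ρ : ℝ) (W : Set (ℝ × ℝ)) : Prop where
  pos : 0 < ρ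
  mem_of_nonneg : ∀ z, 0 ≤ discQ c ρ z → z ∈ W
  exists_eq : ∃ κ > 0, ∀ w ∈ W, l w = 1 + κ * bump c ρ w
  subset_closure_interior : W ⊆ closure (interior W)

namespace IsBumpOn

lemma exists_partials_eq (h : IsBumpOn l c ρ W) (hl : ContDiff ℝ 2 l) :
    ∃ κ > 0, ∀ z ∈ W, ∂₁ l z = max (discQ c ρ z) 0 ^ 2 * (κ * bumpA c ρ z) ∧
      ∂₂ l z = max (discQ c ρ z) 0 ^ 2 * (κ * bumpB c ρ z) ∧
      ∂₁ (∂₁ l) z + ∂₂ (∂₂ l) z = -(max (discQ c ρ z) 0 * (κ * bumpC c ρ z)) := by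
  obtain ⟨κ, hκ, hlκ⟩ := h.exists_eq
  have hX : ∂₁ (fun w => 1 + κ * bump c ρ w) = fun w => κ * ∂₁ (bump c ρ) w := by
    ext z
    simpa [(hasPartialsAt_bump c ρ z).fst_eq] using
      ((HasPartialsAt.const 1 z).add ((hasPartialsAt_bump c ρ z).const_mul κ)).fst_eq
  have hY : ∂₂ (fun w => 1 + κ * bump c ρ w) = fun w => κ * ∂₂ (bump c ρ) w := by
    ext z
    simpa [(hasPartialsAt_bump c ρ z).snd_eq] using
      ((HasPartialsAt.const 1 z).add ((hasPartialsAt_bump c ρ z).const_mul κ)).snd_eq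
  obtain ⟨hlX, hlY, hlXX, hlYY⟩ := eqOn_partials_of_subset_closure_interior hl
    (contDiff_const.add (contDiff_const.mul (contDiff_bump c ρ))) h.subset_closure_interior hlκ
  refine ⟨κ, hκ, fun z hz => ⟨?_, ?_, ?_⟩⟩
  · rw [hlX hz, hX, partialX_bump]
    ring
  · rw [hlY hz, hY, partialY_bump]
    ring
  · rw [hlXX hz, hlYY hz, hX, hY, ((hasPartialsAt_partialX_bump c ρ z).const_mul κ).fst_eq,
      ((hasPartialsAt_partialY_bump c ρ z).const_mul κ).snd_eq]
    linear_combination κ * bumpXX_add_bumpYY c ρ z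

lemma isTestDisc (h : IsBumpOn l c ρ W) (hl : ContDiff ℝ 2 l) : IsTestDisc l c ρ W where
  pos := h.pos
  mem_of_nonneg := h.mem_of_nonneg
  exists_coeff := by
    obtain ⟨κ, hκ, hlκ⟩ := h.exists_partials_eq hl
    refine ⟨_, _, _, ⟨?_, ?_, ?_⟩, ?_, hlκ⟩
    · exact continuous_const.mul (continuous_bumpA c ρ)
    · exact continuous_const.mul (continuous_bumpB c ρ)
    · exact continuous_const.mul (continuous_bumpC c ρ)
    · exact fun z hz => mul_pos hκ (bumpC_pos_of_discQ_eq_zero h.pos hz)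

lemma partials_on_diameter (h : IsBumpOn l c ρ W) (hl : ContDiff ℝ 2 l) {t : ℝ}
    (ht : t ∈ Ioo (c.1 - ρ) (c.1 + ρ)) :
    ∂₂ l (t, c.2) = 0 ∧ ∂₁ (∂₁ l) (t, c.2) + ∂₂ (∂₂ l) (t, c.2) < 0 := by
  obtain ⟨κ, hκ, hlκ⟩ := h.exists_partials_eq hl
  have hQ : 0 < discQ c ρ (t, c.2) := by
    simp only [discQ]
    nlinarith [ht.1, ht.2]
  obtain ⟨-, hY, hΔ⟩ := hlκ _ (h.mem_of_nonneg _ hQ.le)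
  rw [hY, hΔ, max_eq_left hQ.le]
  refine ⟨by simp [bumpB], neg_neg_of_pos (mul_pos hQ (mul_pos hκ ?_))⟩
  exact bumpC_pos_of_snd_eq h.pos hQ.le rfl

end IsBumpOn

/-- The property of a conformal factor `l` that prevents `l (dx² + dy²)` from being induced by a
`C²` surface near the origin: arbitrarily close to the origin there is a disc on which `l` is a
bump, and every point of its boundary circle is accumulated by further discs on neighbourhoods of
which `l` is a bump. -/
def IsPogorelovFactor (l : ℝ × ℝ → ℝ) : Prop :=
  ∀ N ∈ 𝓝 (0 : ℝ × ℝ), ∃ (c : ℝ × ℝ) (ρ : ℝ) (W : Set (ℝ × ℝ)), W ⊆ N ∧ IsBumpOn l c ρ W ∧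
    ∀ z, discQ c ρ z = 0 → ∀ N' ∈ 𝓝 z, ∃ (c' : ℝ × ℝ) (ρ' : ℝ) (W' : Set (ℝ × ℝ)),
      W' ⊆ N' ∧ IsOpen W' ∧ IsBumpOn l c' ρ' W'

lemma IsPogorelovFactor.not_isConformal (h : IsPogorelovFactor l) (hl : ContDiff ℝ 2 l)
    {U : ℝ × ℝ → E3} {Ω : Set (ℝ × ℝ)} (h0 : 0 ∈ Ω) : ¬ IsConformal U l Ω := by
  intro hU
  obtain ⟨Ω', hΩΩ', hΩ', h0', hnormal⟩ := hU.exists_nhds_inner_normal_pos h0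
  obtain ⟨c, ρ, W, hWΩ', hbump, htest⟩ := h Ω' (hΩ'.mem_nhds h0')
  obtain ⟨z, hz, hnot⟩ := (hU.mono hΩ' hΩΩ').exists_not_accumulatesTestDiscs
    (hbump.isTestDisc hl) hWΩ' (fun t ht => (hbump.partials_on_diameter hl ht).1)
    (fun t ht => (hbump.partials_on_diameter hl ht).2) hnormal
  refine hnot fun N hN => ?_
  obtain ⟨c', ρ', W', hW'N, hW', hbump'⟩ := htest z hz N hN
  exact ⟨c', ρ', W', hW'N, hW', hbump'.isTestDisc hl⟩

end BumpDisc

lemma lipschitzOnWith_tsum {X F J : Type*} [PseudoMetricSpace X] [NormedAddCommGroup F]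
    {f : J → X → F} {L : J → NNReal} {s : NNReal} {K : Set X}
    (hf : ∀ j, LipschitzOnWith (L j) (f j) K) (hL : HasSum L s)
    (hsum : ∀ x ∈ K, Summable fun j => f j x) :
    LipschitzOnWith s (fun x => ∑' j, f j x) K := by
  refine LipschitzOnWith.of_dist_le_mul fun x hx y hy => ?_
  rw [dist_eq_norm, ← (hsum x hx).tsum_sub (hsum y hy)]
  refine tsum_of_norm_bounded ((NNReal.hasSum_coe.2 hL).mul_right (dist x y)) fun j => ?_
  rw [← dist_eq_norm]
  exact (hf j).dist_le_mul x hx y hy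

section Series

variable {E F J : Type*} [NormedAddCommGroup E] [NormedSpace ℝ E] [NormedAddCommGroup F]
  [NormedSpace ℝ F]

lemma dist_iteratedFDeriv_two (f : E → F) (x y : E) :
    dist (iteratedFDeriv ℝ 2 f x) (iteratedFDeriv ℝ 2 f y) =
      dist (fderiv ℝ (fderiv ℝ f) x) (fderiv ℝ (fderiv ℝ f) y) := by
  rw [iteratedFDeriv_succ_eq_comp_right, iteratedFDeriv_succ_eq_comp_right, Function.comp_apply,
    Function.comp_apply, LinearIsometryEquiv.dist_map]
  simpa only [iteratedFDerivWithin_univ, fderivWithin_univ] using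
    dist_iteratedFDerivWithin_one (𝕜 := ℝ) (s := univ) (t := univ) (x := x) (y := y)
      (fderiv ℝ f) (fderiv ℝ f) uniqueDiffWithinAt_univ uniqueDiffWithinAt_univ

lemma locallyLipschitz_iteratedFDeriv_bump (c : ℝ × ℝ) (ρ : ℝ) :
    LocallyLipschitz (iteratedFDeriv ℝ 2 (bump c ρ)) := by
  intro z
  obtain ⟨K, t, ht, h⟩ := locallyLipschitz_fderiv_fderiv_bump c ρ z
  refine ⟨K, t, ht, LipschitzOnWith.of_dist_le_mul fun x hx y hy => ?_⟩
  rw [dist_iteratedFDeriv_two]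
  exact h.dist_le_mul x hx y hy

lemma iteratedFDeriv_const_add_of_ne {n : ℕ} (hn : n ≠ 0) {f : E → F} (hf : ContDiff ℝ n f)
    (c : F) : iteratedFDeriv ℝ n (fun x => c + f x) = iteratedFDeriv ℝ n f := by
  ext1 x
  rw [fun_iteratedFDeriv_add_apply contDiff_const.contDiffAt hf.contDiffAt,
    iteratedFDeriv_const_of_ne hn, Pi.zero_apply, zero_add]

lemma exists_norm_iteratedFDeriv_le_of_hasCompactSupport {N : ℕ} {f : E → F}
    (hf : ContDiff ℝ N f) (hs : HasCompactSupport f) :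
    ∃ M : NNReal, ∀ k ≤ N, ∀ x, ‖iteratedFDeriv ℝ k f x‖ ≤ M := by
  have hbound (k : ℕ) : ∃ M : NNReal, k ≤ N → ∀ x, ‖iteratedFDeriv ℝ k f x‖ ≤ M := by
    by_cases hk : k ≤ N
    · obtain ⟨M, hM⟩ := (hs.iteratedFDeriv (𝕜 := ℝ) k).exists_bound_of_continuous
        (hf.continuous_iteratedFDeriv (by exact_mod_cast hk))
      exact ⟨M.toNNReal, fun _ x => (hM x).trans (Real.le_coe_toNNReal M)⟩
    · exact ⟨0, fun h => absurd h hk⟩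
  choose M hM using hbound
  obtain ⟨B, hB⟩ := ((Finset.range (N + 1)).image M).exists_le
  exact ⟨B, fun k hk x => (hM k hk x).trans (NNReal.coe_le_coe.2
    (hB _ (Finset.mem_image_of_mem M (Finset.mem_range_succ_iff.2 hk))))⟩

lemma exists_pos_hasSum_mul_lt [Countable J] {D : J → NNReal} (hD : ∀ j, 0 < D j) {ε : NNReal}
    (hε : ε ≠ 0) : ∃ κ : J → NNReal, (∀ j, 0 < κ j) ∧ ∃ s < ε, HasSum (fun j => κ j * D j) s := by
  obtain ⟨ε', hε', s, hs, hsε⟩ := NNReal.exists_pos_sum_of_countable hε J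
  refine ⟨fun j => ε' j / D j, fun j => div_pos (hε' j) (hD j), s, hsε, ?_⟩
  simpa only [div_mul_cancel₀ _ (hD _).ne'] using hs

lemma exists_pos_smul_contDiff_tsum [Countable J] [CompleteSpace F] {N : ℕ} {f : J → E → F}
    {D : J → NNReal} {K : Set E} (hf : ∀ j, ContDiff ℝ N (f j)) (hD : ∀ j, 0 < D j)
    (hfD : ∀ j, ∀ k ≤ N, ∀ x, ‖iteratedFDeriv ℝ k (f j) x‖ ≤ D j)
    (hL : ∀ j, LipschitzOnWith (D j) (iteratedFDeriv ℝ N (f j)) K) {ε : NNReal} (hε : ε ≠ 0) :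
    ∃ κ : J → ℝ, (∀ j, 0 < κ j) ∧ ContDiff ℝ N (fun x => ∑' j, κ j • f j x) ∧
      (∃ L, LipschitzOnWith L (iteratedFDeriv ℝ N fun x => ∑' j, κ j • f j x) K) ∧
      ∀ x, ‖∑' j, κ j • f j x‖ < ε := by
  obtain ⟨κ, hκ, s, hsε, hsum⟩ := exists_pos_hasSum_mul_lt hD hε
  have hsum' := NNReal.hasSum_coe.2 hsum
  have hcd (j) : ContDiff ℝ N fun x => (κ j : ℝ) • f j x := contDiff_const.smul (hf j)
  have hit (k : ℕ) (hk : k ≤ N) (j : J) (x : E) :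
      iteratedFDeriv ℝ k (fun x => (κ j : ℝ) • f j x) x = (κ j : ℝ) • iteratedFDeriv ℝ k (f j) x :=
    iteratedFDeriv_const_smul_apply' ((hf j).of_le (by exact_mod_cast hk)).contDiffAt
  have hbound (k : ℕ) (j : J) (x : E) (hk : (k : ℕ∞) ≤ N) :
      ‖iteratedFDeriv ℝ k (fun x => (κ j : ℝ) • f j x) x‖ ≤ ((κ j * D j : NNReal) : ℝ) := by
    have hk : k ≤ N := by exact_mod_cast hk
    rw [hit k hk, norm_smul, Real.norm_of_nonneg (κ j).coe_nonneg, NNReal.coe_mul]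
    exact mul_le_mul_of_nonneg_left (hfD j k hk x) (κ j).coe_nonneg
  refine ⟨fun j => κ j, fun j => by exact_mod_cast hκ j,
    contDiff_tsum hcd (fun _ _ => hsum'.summable) hbound, ⟨s, ?_⟩, fun x => ?_⟩
  · rw [iteratedFDeriv_tsum hcd (fun _ _ => hsum'.summable) hbound le_rfl]
    refine lipschitzOnWith_tsum (fun j => LipschitzOnWith.of_dist_le_mul fun x hx y hy => ?_) hsum
      fun x _ => .of_norm_bounded hsum'.summable fun j => hbound N j x le_rfl
    rw [hit N le_rfl, hit N le_rfl, dist_eq_norm, ← smul_sub, norm_smul, ← dist_eq_norm,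
      Real.norm_of_nonneg (κ j).coe_nonneg, NNReal.coe_mul, mul_assoc]
    exact mul_le_mul_of_nonneg_left ((hL j).dist_le_mul x hx y hy) (κ j).coe_nonneg
  · refine (tsum_of_norm_bounded hsum' fun j => ?_).trans_lt (by exact_mod_cast hsε)
    simpa only [norm_iteratedFDeriv_zero] using hbound 0 j x (by simp)

end Series

lemma exists_pos_smul_contDiff_tsum_bump {J : Type*} [Countable J] (c : J → ℝ × ℝ) (ρ : J → ℝ)
    {K : Set (ℝ × ℝ)} (hK : IsCompact K) {ε : NNReal} (hε : ε ≠ 0) :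
    ∃ κ : J → ℝ, (∀ j, 0 < κ j) ∧ ContDiff ℝ 2 (fun z => ∑' j, κ j • bump (c j) (ρ j) z) ∧
      (∃ L, LipschitzOnWith L (iteratedFDeriv ℝ 2 fun z => ∑' j, κ j • bump (c j) (ρ j) z) K) ∧
      ∀ z, ‖∑' j, κ j • bump (c j) (ρ j) z‖ < ε := by
  choose M hM using fun j => exists_norm_iteratedFDeriv_le_of_hasCompactSupport (N := 2)
    (contDiff_bump (c j) (ρ j)) (hasCompactSupport_bump (c j) (ρ j))
  choose L hL using fun j => LocallyLipschitzOn.exists_lipschitzOnWith_of_compact hK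
    (locallyLipschitz_iteratedFDeriv_bump (c j) (ρ j)).locallyLipschitzOn
  exact exists_pos_smul_contDiff_tsum (N := 2) (D := fun j => M j + L j + 1)
    (fun j => contDiff_bump (c j) (ρ j)) (fun j => by positivity)
    (fun j k hk x => (hM j k hk x).trans
      (NNReal.coe_le_coe.2 (le_self_add.trans le_self_add)))
    (fun j => (hL j).weaken (le_add_self.trans le_self_add)) hε

section Discs

open MeasureTheory

variable {E : Type*} [NormedAddCommGroup E]

lemma exists_closedBall_subset_ball_of_covers_ae {X : Type*} [PseudoMetricSpace X]
    [MeasurableSpace X] {μ : Measure X} [μ.IsOpenPosMeasure] {F t : Set X} {r : X → ℝ}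
    (hF : IsClosed F) (hr : ∀ x ∈ t, 0 < r x ∧ r x < infDist x F / 3)
    (hμ : μ (Fᶜ \ ⋃ x ∈ t, closedBall x (r x)) = 0) {z : X} (hz : z ∈ frontier F) {δ : ℝ}
    (hδ : 0 < δ) : ∃ x ∈ t, closedBall x (r x) ⊆ ball z δ := by
  have hzF : z ∈ F := hF.frontier_subset hz
  have hne : (ball z (δ / 2) ∩ Fᶜ).Nonempty :=
    mem_closure_iff_nhds.1 (frontier_subset_closure (frontier_compl F ▸ hz)) _
      (ball_mem_nhds z (half_pos hδ))
  have hpos := (isOpen_ball.inter hF.isOpen_compl).measure_pos μ hne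
  obtain ⟨y, ⟨hyz, hyF⟩, hy⟩ := not_subset.1 fun h => hpos.ne' (measure_mono_null h hμ)
  obtain ⟨x, hxt, hyx⟩ := mem_iUnion₂.1 (by_contra fun h => hy ⟨hyF, h⟩)
  obtain ⟨hr0, hr1⟩ := hr x hxt
  refine ⟨x, hxt, closedBall_subset_ball' ?_⟩
  have hxz := infDist_le_dist_of_mem (x := x) hzF
  have htri := dist_triangle x y z
  rw [mem_closedBall'] at hyx
  rw [mem_ball] at hyz
  linarith

lemma exists_disjoint_closedBall_accumulating_frontier [NormedSpace ℝ E]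
    [FiniteDimensional ℝ E] {F : Set E} (hF : IsClosed F) (hne : F.Nonempty) :
    ∃ (t : Set E) (r : E → ℝ), t.Countable ∧ (∀ x ∈ t, 0 < r x) ∧
      (∀ x ∈ t, Disjoint (closedBall x (r x)) F) ∧
      (t.PairwiseDisjoint fun x => closedBall x (r x)) ∧
      ∀ z ∈ frontier F, ∀ δ > 0, ∃ x ∈ t, closedBall x (r x) ⊆ ball z δ := by
  borelize E
  have := FiniteDimensional.proper_real E
  have hpos : ∀ x ∈ Fᶜ, 0 < infDist x F / 3 := fun x hx =>
    div_pos ((hF.notMem_iff_infDist_pos hne).1 hx) three_pos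
  obtain ⟨t, r, htc, -, hr, hμ, hdisj⟩ := Besicovitch.exists_disjoint_closedBall_covering_ae
    (Measure.addHaar : Measure E) (fun _ => univ) Fᶜ
    (fun x _ δ hδ => ⟨δ / 2, mem_univ _, half_pos hδ, half_lt_self hδ⟩)
    (fun x => infDist x F / 3) hpos
  refine ⟨t, r, htc, fun x hx => (hr x hx).2.1, fun x hx => ?_, hdisj, fun z hz δ hδ =>
    exists_closedBall_subset_ball_of_covers_ae hF (fun x hx => (hr x hx).2) hμ hz hδ⟩
  refine disjoint_closedBall_of_lt_infDist ?_
  linarith [(hr x hx).2.1, (hr x hx).2.2]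

lemma sphere_subset_frontier_closure_iUnion [NormedSpace ℝ E] {ι : Type*} {c : ι → E}
    {ρ : ι → ℝ} {k : ι} {R : ℝ} (hk : ρ k ≠ 0) (hR : ρ k < R)
    (hdisj : ∀ i ≠ k, Disjoint (ball (c k) R) (closedBall (c i) (ρ i))) :
    sphere (c k) (ρ k) ⊆ frontier (closure (⋃ i, closedBall (c i) (ρ i))) := by
  have hannulus : ball (c k) R ∩ (closedBall (c k) (ρ k))ᶜ ⊆
      (closure (⋃ i, closedBall (c i) (ρ i)))ᶜ := by
    refine disjoint_left.1 (Disjoint.closure_right ?_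
      (isOpen_ball.inter isClosed_closedBall.isOpen_compl))
    rw [disjoint_iUnion_right]
    intro i
    rcases eq_or_ne i k with rfl | hik
    · exact disjoint_compl_left.mono_left inter_subset_right
    · exact (hdisj i hik).mono_left inter_subset_left
  intro z hz
  rw [frontier_eq_closure_inter_closure, closure_closure]
  refine ⟨subset_closure (mem_iUnion.2 ⟨k, sphere_subset_closedBall hz⟩),
    closure_mono hannulus (isOpen_ball.inter_closure ⟨?_, ?_⟩)⟩
  · exact mem_ball.2 (hz.trans_lt hR)
  · rw [← frontier_closedBall _ hk, ← frontier_compl] at hz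
    exact frontier_subset_closure hz

/-- A family of disjoint closed balls such that every neighbourhood of the origin contains one of
them whose bounding sphere is accumulated, at each of its points, by isolated balls of the
family. -/
structure IsBallConfiguration {J : Type*} (c : J → E) (ρ : J → ℝ) : Prop where
  pos : ∀ j, 0 < ρ j
  disjoint : ∀ i j, i ≠ j → Disjoint (closedBall (c i) (ρ i)) (closedBall (c j) (ρ j))
  accumulates : ∀ r > 0, ∃ k, closedBall (c k) (ρ k) ⊆ ball 0 r ∧
    ∀ z ∈ sphere (c k) (ρ k), ∀ δ > 0, ∃ j, ∃ R > ρ j, closedBall (c j) R ⊆ ball z δ ∧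
      ∀ i ≠ j, Disjoint (closedBall (c j) R) (closedBall (c i) (ρ i))

lemma isBallConfiguration_sumElim {ι : Type*} {c : ι → E} {ρ : ι → ℝ} {t : Set E} {r : E → ℝ}
    (hρ : ∀ k, 0 < ρ k)
    (hdisj : ∀ i k, i ≠ k → Disjoint (closedBall (c i) (ρ i)) (closedBall (c k) (ρ k)))
    (h0 : ∀ δ > 0, ∃ k, closedBall (c k) (ρ k) ⊆ ball 0 δ) (hr : ∀ x ∈ t, 0 < r x)
    (hrc : ∀ x ∈ t, ∀ k, Disjoint (closedBall x (r x)) (closedBall (c k) (ρ k)))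
    (ht : t.PairwiseDisjoint fun x => closedBall x (r x))
    (hacc : ∀ k, ∀ z ∈ sphere (c k) (ρ k), ∀ δ > 0, ∃ x ∈ t, closedBall x (r x) ⊆ ball z δ) :
    IsBallConfiguration (Sum.elim c ((↑) : t → E)) (Sum.elim ρ fun x => r x / 2) := by
  have hhalf (x : t) : closedBall (x : E) (r x / 2) ⊆ closedBall x (r x) :=
    closedBall_subset_closedBall (half_le_self (hr x x.2).le)
  have hisolated (x : t) : ∀ i ≠ Sum.inr x, Disjoint (closedBall (x : E) (r x))
      (closedBall (Sum.elim c (↑) i : E) (Sum.elim ρ (fun x : t => r x / 2) i)) := by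
    rintro (k | y) hi
    · exact hrc x x.2 k
    · exact (ht x.2 y.2 fun h => hi (congrArg Sum.inr (Subtype.ext h.symm))).mono_right (hhalf y)
  refine ⟨?_, ?_, fun δ hδ => ?_⟩
  · rintro (k | x)
    exacts [hρ k, half_pos (hr x x.2)]
  · rintro (i | x) (k | y) hij
    · exact hdisj i k fun h => hij (congrArg Sum.inl h)
    · exact ((hisolated y _ hij).mono_left (hhalf y)).symm
    all_goals exact (hisolated x _ hij.symm).mono_left (hhalf x)
  · obtain ⟨k, hk⟩ := h0 δ hδ
    refine ⟨Sum.inl k, hk, fun z hz ε hε => ?_⟩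
    obtain ⟨x, hx, hxz⟩ := hacc k z hz ε hε
    exact ⟨Sum.inr ⟨x, hx⟩, r x, half_lt_self (hr x hx), hxz, hisolated ⟨x, hx⟩⟩

/-- The centre of the `k`-th disc of a sequence of discs that shrinks to the origin. -/
def targetCenter (k : ℕ) : E2 := EuclideanSpace.single 0 ((1 / 4 : ℝ) ^ k / 2)

/-- The radius of the disc with centre `targetCenter k`; even the disc with twice this radius is
disjoint from the other discs of the sequence. -/
def targetRadius (k : ℕ) : ℝ := (1 / 4 : ℝ) ^ k / 8

lemma targetRadius_pos (k : ℕ) : 0 < targetRadius k := by unfold targetRadius; positivity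

lemma two_mul_targetRadius_add_lt_dist {i k : ℕ} (h : i ≠ k) :
    2 * targetRadius i + targetRadius k < dist (targetCenter i) (targetCenter k) := by
  have hpow (i k : ℕ) (h : i < k) : (1 / 4 : ℝ) ^ k ≤ (1 / 4) ^ i / 4 := by
    calc (1 / 4 : ℝ) ^ k ≤ (1 / 4) ^ (i + 1) :=
          pow_le_pow_of_le_one (by norm_num) (by norm_num) h
      _ = (1 / 4) ^ i / 4 := by ring
  have hi : (0 : ℝ) < (1 / 4) ^ i := by positivity
  have hk : (0 : ℝ) < (1 / 4) ^ k := by positivity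
  simp only [targetRadius, targetCenter, PiLp.dist_single_same, Real.dist_eq]
  rcases lt_or_gt_of_ne h with h | h
  · exact lt_abs.2 (.inl (by linarith [hpow i k h]))
  · exact lt_abs.2 (.inr (by linarith [hpow k i h]))

lemma disjoint_closedBall_target {i k : ℕ} (h : i ≠ k) :
    Disjoint (closedBall (targetCenter i) (2 * targetRadius i))
      (closedBall (targetCenter k) (targetRadius k)) :=
  closedBall_disjoint_closedBall (two_mul_targetRadius_add_lt_dist h)

lemma exists_closedBall_target_subset_ball {r : ℝ} (hr : 0 < r) :
    ∃ k, closedBall (targetCenter k) (targetRadius k) ⊆ ball 0 r := by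
  obtain ⟨k, hk⟩ := exists_pow_lt_of_lt_one hr (show (1 / 4 : ℝ) < 1 by norm_num)
  have hk0 : (0 : ℝ) < (1 / 4) ^ k := by positivity
  refine ⟨k, closedBall_subset_ball' ?_⟩
  rw [dist_zero_right, targetCenter, PiLp.norm_single, Real.norm_of_nonneg (by positivity),
    targetRadius]
  linarith

lemma exists_isBallConfiguration :
    ∃ (J : Type) (_ : Countable J) (c : J → E2) (ρ : J → ℝ), IsBallConfiguration c ρ := by
  have hsub (k : ℕ) : closedBall (targetCenter k) (targetRadius k) ⊆
      closure (⋃ i, closedBall (targetCenter i) (targetRadius i)) :=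
    (subset_iUnion (fun i => closedBall (targetCenter i) (targetRadius i)) k).trans subset_closure
  obtain ⟨t, r, htc, hr, hrF, ht, hacc⟩ := exists_disjoint_closedBall_accumulating_frontier
    isClosed_closure ⟨_, hsub 0 (mem_closedBall_self (targetRadius_pos 0).le)⟩
  have hdouble (k : ℕ) : targetRadius k < 2 * targetRadius k := by linarith [targetRadius_pos k]
  refine ⟨ℕ ⊕ t, @instCountableSum _ _ _ htc.to_subtype, _, _, isBallConfiguration_sumElim
    targetRadius_pos (fun i k hik => ?_) (fun δ => exists_closedBall_target_subset_ball) hr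
    (fun x hx k => (hrF x hx).mono_right (hsub k)) ht fun k z hz => hacc z ?_⟩
  · exact (disjoint_closedBall_target hik).mono_left
      (closedBall_subset_closedBall (hdouble i).le)
  · exact sphere_subset_frontier_closure_iUnion (targetRadius_pos k).ne' (hdouble k)
      (fun i hik => (disjoint_closedBall_target hik.symm).mono_left ball_subset_closedBall) hz

end Discs

/-- The coordinates of a point of the plane. -/
def planeEquiv : E2 ≃L[ℝ] ℝ × ℝ :=
  (EuclideanSpace.equiv (Fin 2) ℝ).trans (ContinuousLinearEquiv.finTwoArrow ℝ ℝ)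

lemma planeEquiv_apply (x : E2) : planeEquiv x = (x 0, x 1) := rfl

lemma planeEquiv_single_zero : planeEquiv (EuclideanSpace.single 0 1) = (1, 0) := by
  simp [planeEquiv_apply]

lemma planeEquiv_single_one : planeEquiv (EuclideanSpace.single 1 1) = (0, 1) := by
  simp [planeEquiv_apply]

lemma norm_planeEquiv_le (x : E2) : ‖planeEquiv x‖ ≤ ‖x‖ := by
  rw [planeEquiv_apply, Prod.norm_mk]
  exact max_le (PiLp.norm_apply_le x 0) (PiLp.norm_apply_le x 1)

lemma discQ_planeEquiv (c x : E2) (ρ : ℝ) :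
    discQ (planeEquiv c) ρ (planeEquiv x) = ρ ^ 2 - dist x c ^ 2 := by
  rw [dist_eq_norm, EuclideanSpace.real_norm_sq_eq, Fin.sum_univ_two]
  simp only [discQ, planeEquiv_apply, PiLp.sub_apply]
  ring

lemma discQ_nonneg_iff {c : E2} {ρ : ℝ} (hρ : 0 < ρ) (w : ℝ × ℝ) :
    0 ≤ discQ (planeEquiv c) ρ w ↔ planeEquiv.symm w ∈ closedBall c ρ := by
  rw [← planeEquiv.apply_symm_apply w, discQ_planeEquiv, planeEquiv.apply_symm_apply, sub_nonneg,
    sq_le_sq₀ dist_nonneg hρ.le, mem_closedBall]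

lemma discQ_eq_zero_iff {c : E2} {ρ : ℝ} (hρ : 0 < ρ) (w : ℝ × ℝ) :
    discQ (planeEquiv c) ρ w = 0 ↔ planeEquiv.symm w ∈ sphere c ρ := by
  rw [← planeEquiv.apply_symm_apply w, discQ_planeEquiv, planeEquiv.apply_symm_apply, sub_eq_zero,
    sq_eq_sq₀ hρ.le dist_nonneg, mem_sphere, eq_comm]

lemma exists_ball_subset_preimage_planeEquiv {N : Set (ℝ × ℝ)} {z : ℝ × ℝ} (hN : N ∈ 𝓝 z) :
    ∃ δ > 0, planeEquiv.symm ⁻¹' ball (planeEquiv.symm z) δ ⊆ N := by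
  rw [← planeEquiv.apply_symm_apply z] at hN
  obtain ⟨δ, hδ, hδN⟩ := Metric.mem_nhds_iff.1 (planeEquiv.continuous.continuousAt hN)
  exact ⟨δ, hδ, fun w hw => by simpa using hδN hw⟩

lemma preimage_planeEquiv_closedBall_subset_closure_interior (c : E2) {ρ : ℝ} (hρ : ρ ≠ 0) :
    planeEquiv.symm ⁻¹' closedBall c ρ ⊆
      closure (interior (planeEquiv.symm ⁻¹' closedBall c ρ)) := by
  change planeEquiv.symm.toHomeomorph ⁻¹' _ ⊆
    closure (interior (planeEquiv.symm.toHomeomorph ⁻¹' _))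
  rw [← Homeomorph.preimage_interior, ← Homeomorph.preimage_closure, interior_closedBall c hρ,
    closure_ball c hρ]

namespace IsBallConfiguration

variable {J : Type*} {c : J → E2} {ρ κ : J → ℝ}

lemma isPogorelovFactor (h : IsBallConfiguration c ρ) (hκ : ∀ j, 0 < κ j) :
    IsPogorelovFactor fun z => 1 + ∑' j, κ j • bump (planeEquiv (c j)) (ρ j) z := by
  have hsum (k : J) (w : ℝ × ℝ) (hw : ∀ i ≠ k, planeEquiv.symm w ∉ closedBall (c i) (ρ i)) :
      1 + ∑' j, κ j • bump (planeEquiv (c j)) (ρ j) w =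
        1 + κ k * bump (planeEquiv (c k)) (ρ k) w := by
    rw [tsum_eq_single k fun i hi => ?_, smul_eq_mul]
    have hneg := mt (discQ_nonneg_iff (h.pos i) w).1 (hw i hi)
    rw [bump_eq_zero (not_le.1 hneg).le, smul_zero]
  intro N hN
  obtain ⟨r, hr, hrN⟩ := exists_ball_subset_preimage_planeEquiv hN
  rw [map_zero] at hrN
  obtain ⟨k, hk, hz⟩ := h.accumulates r hr
  refine ⟨planeEquiv (c k), ρ k, planeEquiv.symm ⁻¹' closedBall (c k) (ρ k),
    (preimage_mono hk).trans hrN, ⟨h.pos k, fun w => (discQ_nonneg_iff (h.pos k) w).1,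
      ⟨κ k, hκ k, fun w hw => hsum k w fun i hi hwi => ?_⟩,
      preimage_planeEquiv_closedBall_subset_closure_interior _ (h.pos k).ne'⟩,
    fun z hzk N' hN' => ?_⟩
  · exact (h.disjoint i k hi).le_bot ⟨hwi, hw⟩
  · obtain ⟨δ, hδ, hδN⟩ := exists_ball_subset_preimage_planeEquiv hN'
    obtain ⟨j, R, hR, hsub, hj⟩ := hz _ ((discQ_eq_zero_iff (h.pos k) z).1 hzk) δ hδ
    have hopen : IsOpen (planeEquiv.symm ⁻¹' ball (c j) R) :=
      isOpen_ball.preimage planeEquiv.symm.continuous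
    refine ⟨planeEquiv (c j), ρ j, planeEquiv.symm ⁻¹' ball (c j) R,
      (preimage_mono (ball_subset_closedBall.trans hsub)).trans hδN, hopen, h.pos j, fun w hw => ?_,
      ⟨κ j, hκ j, fun w hw => hsum j w fun i hi hwi => ?_⟩,
      hopen.interior_eq.symm ▸ subset_closure⟩
    · exact closedBall_subset_ball hR ((discQ_nonneg_iff (h.pos j) w).1 hw)
    · exact (hj i hi).le_bot ⟨ball_subset_closedBall hw, hwi⟩

end IsBallConfiguration

lemma exists_isPogorelovFactor :
    ∃ l : ℝ × ℝ → ℝ, ContDiff ℝ 2 l ∧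
      (∃ L, LipschitzOnWith L (iteratedFDeriv ℝ 2 l) (closedBall 0 1)) ∧ (∀ z, 0 < l z) ∧
      IsPogorelovFactor l := by
  obtain ⟨J, _, c, ρ, hcρ⟩ := exists_isBallConfiguration
  obtain ⟨κ, hκ, hsum, ⟨L, hL⟩, hlt⟩ := exists_pos_smul_contDiff_tsum_bump
    (fun j => planeEquiv (c j)) ρ (isCompact_closedBall (0 : ℝ × ℝ) 1) one_ne_zero
  refine ⟨_, contDiff_const.add hsum, ⟨L, ?_⟩, fun z => ?_, hcρ.isPogorelovFactor hκ⟩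
  · rwa [iteratedFDeriv_const_add_of_ne two_ne_zero hsum]
  · linarith [(abs_lt.1 (hlt z)).1, NNReal.coe_one]

lemma lipschitzOnWith_iteratedFDeriv_comp {E F G H : Type*} [NormedAddCommGroup E]
    [NormedSpace ℝ E] [NormedAddCommGroup F] [NormedSpace ℝ F] [NormedAddCommGroup G]
    [NormedSpace ℝ G] [NormedAddCommGroup H] [NormedSpace ℝ H] {n : ℕ} {f : F → G}
    (hf : ContDiff ℝ n f) (A : E →L[ℝ] F) (B : G →L[ℝ] H) {s : Set E} {t : Set F} {L : NNReal}
    (hL : LipschitzOnWith L (iteratedFDeriv ℝ n f) t) (hst : MapsTo A s t) :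
    ∃ L', LipschitzOnWith L' (iteratedFDeriv ℝ n (B ∘ (f ∘ A))) s := by
  have hcomp : iteratedFDeriv ℝ n (B ∘ (f ∘ A)) = fun x =>
      ContinuousLinearMap.compContinuousMultilinearMapL ℝ (fun _ : Fin n => E) G H B
        (ContinuousMultilinearMap.compContinuousLinearMapL (fun _ : Fin n => A)
          (iteratedFDeriv ℝ n f (A x))) := by
    ext1 x
    rw [B.iteratedFDeriv_comp_left (hf.comp A.contDiff).contDiffAt le_rfl,
      A.iteratedFDeriv_comp_right hf x le_rfl]
    rfl
  rw [hcomp]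
  exact ⟨_, (ContinuousLinearMap.lipschitz _).comp_lipschitzOnWith
    ((ContinuousLinearMap.lipschitz _).comp_lipschitzOnWith
      (hL.comp A.lipschitz.lipschitzOnWith hst))⟩

lemma inner_fderiv_single (u : E2 → E3) (x : E2) (i j : Fin 2) :
    ⟪fderiv ℝ u x (EuclideanSpace.single i 1), fderiv ℝ u x (EuclideanSpace.single j 1)⟫_ℝ =
      ((Jac u x)ᵀ * Jac u x) i j := by
  simp [Jac, Matrix.mul_apply, PiLp.inner_apply, Fin.sum_univ_three, mul_comm]

lemma isConformal_comp_planeEquiv_symm {l : ℝ × ℝ → ℝ} (hl : ContDiff ℝ 2 l) (hpos : ∀ z, 0 < l z)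
    {u : E2 → E3} {Ω : Set E2} (hΩ : IsOpen Ω) (hu : ContDiffOn ℝ 2 u Ω)
    (hg : ∀ x ∈ Ω, (Jac u x)ᵀ * Jac u x = l (planeEquiv x) • (1 : Matrix (Fin 2) (Fin 2) ℝ)) :
    IsConformal (u ∘ planeEquiv.symm) l (planeEquiv.symm ⁻¹' Ω) := by
  have hinner (i j : Fin 2) (z) (hz : z ∈ planeEquiv.symm ⁻¹' Ω) :
      ⟪fderiv ℝ (u ∘ planeEquiv.symm) z (planeEquiv (EuclideanSpace.single i 1)),
        fderiv ℝ (u ∘ planeEquiv.symm) z (planeEquiv (EuclideanSpace.single j 1))⟫_ℝ =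
      l z * (1 : Matrix (Fin 2) (Fin 2) ℝ) i j := by
    simpa [planeEquiv.symm.comp_right_fderiv, inner_fderiv_single] using
      congrFun (congrFun (hg _ hz) i) j
  refine ⟨hΩ.preimage planeEquiv.symm.continuous,
    hu.comp planeEquiv.symm.contDiff.contDiffOn fun z hz => hz, hl.contDiffOn, fun z _ => hpos z,
    fun z hz => ?_, fun z hz => ?_, fun z hz => ?_⟩
  · simpa [planeEquiv_single_zero, partialX] using hinner 0 0 z hz
  · simpa [planeEquiv_single_one, partialY] using hinner 1 1 z hz
  · simpa [planeEquiv_single_zero, planeEquiv_single_one, partialX, partialY] using hinner 0 1 z hz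

theorem pogorelov_counterexample_general :
    ∃ g : E2 → Matrix (Fin 2) (Fin 2) ℝ,
      ContDiffOn ℝ 2 g (ball (0 : E2) 1) ∧
      (∃ L : NNReal, LipschitzOnWith L (fun x => iteratedFDeriv ℝ 2 g x) (ball (0 : E2) 1)) ∧
      (∀ x ∈ ball (0 : E2) 1, (g x).IsSymm ∧ (g x).PosDef) ∧
      ∀ r : ℝ, 0 < r →
        ¬ ∃ u : E2 → EuclideanSpace ℝ (Fin 3),
            ContDiffOn ℝ 2 u (ball (0 : E2) r) ∧
            ∀ x ∈ ball (0 : E2) r, (Jac u x)ᵀ * Jac u x = g x := by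
  obtain ⟨l, hl, ⟨L, hL⟩, hpos, hfactor⟩ := exists_isPogorelovFactor
  set toScalar : ℝ →L[ℝ] Matrix (Fin 2) (Fin 2) ℝ := (ContinuousLinearMap.id ℝ ℝ).smulRight 1
  refine ⟨toScalar ∘ (l ∘ planeEquiv),
    (toScalar.contDiff.comp (hl.comp planeEquiv.contDiff)).contDiffOn,
    lipschitzOnWith_iteratedFDeriv_comp hl (planeEquiv : E2 →L[ℝ] ℝ × ℝ) toScalar hL fun x hx => ?_,
    fun x _ => ⟨Matrix.isSymm_one.smul (l (planeEquiv x)), Matrix.PosDef.one.smul (hpos _)⟩, ?_⟩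
  · rw [mem_ball_zero_iff] at hx
    rw [mem_closedBall_zero_iff]
    exact (norm_planeEquiv_le x).trans hx.le
  · rintro r hr ⟨u, hu, hg⟩
    exact hfactor.not_isConformal hl (by simpa using hr)
      (isConformal_comp_planeEquiv_symm hl hpos isOpen_ball hu hg)

/-- **Pogorelov's counterexample (1972).** There exists a `C^{2,1}` Riemannian metric `g`
on the unit ball `B₁ ⊂ ℝ²` such that no neighborhood `B_r` of the origin admits a `C²`
isometric embedding of `(B_r, g)` into `ℝ³`. -/
theorem pogorelov_counterexample :
    ∃ g : E2 → Matrix (Fin 2) (Fin 2) ℝ,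
      ContDiffOn ℝ 2 g (ball (0 : E2) 1) ∧
      (∃ L : NNReal, LipschitzOnWith L (fun x => iteratedFDeriv ℝ 2 g x) (ball (0 : E2) 1)) ∧
      (∀ x ∈ ball (0 : E2) 1, (g x).IsSymm ∧ (g x).PosDef) ∧
      ∀ r : ℝ, 0 < r → r ≤ 1 →
        ¬ ∃ u : E2 → EuclideanSpace ℝ (Fin 3),
            ContDiffOn ℝ 2 u (ball (0 : E2) r) ∧
            Set.InjOn u (ball (0 : E2) r) ∧
            ∀ x ∈ ball (0 : E2) r, (Jac u x)ᵀ * Jac u x = g x :=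
  let ⟨g, hg, hL, hpos, hu⟩ := pogorelov_counterexample_general
  ⟨g, hg, hL, hpos, fun r hr _ ⟨u, hu2, _, hiso⟩ => hu r hr ⟨u, hu2, hiso⟩⟩
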